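/- arXiv:1904.02310 — 5 statements merged into one kernel-verified Lean document; each statement's English description precedes it below -/
import Mathlib

section
/- Let m ≡ 0 (mod 4) with m ≥ 4, and let e be an integer with 2 ≤ e ≤ m/2 and gcd(m,e) = 2. Then the supports of the codewords of Hamming weight 4 in the extended code C̄_E form a 2-(2^m, 4, 1) design, i.e., a Steiner system S(2,4,2^m): every 2-element subset of the 2^m coordinate positions is contained in the support of exactly one codeword of Hamming weight 4 of C̄_E. -/
open Polynomial Finset

/-- The polynomial `c₀ + c₁x + ⋯ + c_{n−1}x^{n−1}` associated to a vector. -/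
noncomputable def codePoly {n : ℕ} (c : Fin n → ZMod 2) : Polynomial (ZMod 2) :=
  ∑ i : Fin n, Polynomial.C (c i) * Polynomial.X ^ (i : ℕ)

/-- The generator polynomial `g_E(x) = M_α(x) · M_{α^{1+2^e}}(x)`. -/
noncomputable def gE (m e : ℕ) (α : GaloisField 2 m) : Polynomial (ZMod 2) :=
  minpoly (ZMod 2) α * minpoly (ZMod 2) (α ^ (1 + 2 ^ e))

/-- The binary cyclic code `C_E` of length `2^m − 1` with generator polynomial `g_E`. -/
def CE (m e : ℕ) (α : GaloisField 2 m) : Set (Fin (2 ^ m - 1) → ZMod 2) :=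
  {c | gE m e α ∣ codePoly c}

/-- The extended code `C̄_E ⊆ F_2^{2^m}`: the first `2^m − 1` coordinates form a codeword
of `C_E` and all `2^m` coordinates sum to zero. -/
def CEbar (m e : ℕ) (α : GaloisField 2 m) : Set (Fin (2 ^ m) → ZMod 2) :=
  {c | (fun i : Fin (2 ^ m - 1) => c (Fin.castLE (Nat.sub_le _ _) i)) ∈ CE m e α ∧
       ∑ i, c i = 0}


lemma aux_sum_castLE {F : Type*} [AddCommMonoid F] (N : ℕ) (hN : 0 < N) (f : Fin N → F)
    (hf : ∀ i : Fin N, ¬ (i : ℕ) < N - 1 → f i = 0) :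
    ∑ i : Fin (N - 1), f (Fin.castLE (Nat.sub_le _ _) i) = ∑ i, f i := by
  obtain ⟨k, rfl⟩ : ∃ k, N = k + 1 := ⟨N - 1, by omega⟩
  rw [Fin.sum_univ_castSucc, hf (Fin.last k) (by simp), add_zero]
  rfl

/-- locator of a coordinate -/
noncomputable def loc (m : ℕ) (α : GaloisField 2 m) (i : Fin (2 ^ m)) : GaloisField 2 m :=
  if (i : ℕ) < 2 ^ m - 1 then α ^ (i : ℕ) else 0

lemma aux_coprime (m e : ℕ) (hm4 : m % 4 = 0) (hm : 4 ≤ m)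
    (hgcd : Nat.gcd m e = 2)
    (α : GaloisField 2 m) (hα : orderOf α = 2 ^ m - 1) :
    IsCoprime (minpoly (ZMod 2) α) (minpoly (ZMod 2) (α ^ (1 + 2 ^ e))) := by
  have hm0 : m ≠ 0 := by omega
  have hfin : FiniteDimensional (ZMod 2) (GaloisField 2 m) := inferInstance
  have hi (x : GaloisField 2 m) : IsIntegral (ZMod 2) x := IsIntegral.of_finite _ x
  have irr1 := minpoly.irreducible (hi α)
  rw [irr1.coprime_iff_not_dvd]
  intro hd
  have he : e % 4 = 2 := by
    have h2 : 2 ∣ e := hgcd ▸ Nat.gcd_dvd_right m e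
    by_contra h
    have h4 : 4 ∣ e := by omega
    have : 4 ∣ Nat.gcd m e := Nat.dvd_gcd (by omega) h4
    rw [hgcd] at this
    omega
  have h5 : 5 ∣ 1 + 2 ^ e := by
    obtain ⟨k, rfl⟩ : ∃ k, e = 4 * k + 2 := ⟨e / 4, by omega⟩
    have := Nat.ModEq.pow k (show 2 ^ 4 ≡ 1 [MOD 5] by decide)
    rw [Nat.ModEq, ← pow_mul, one_pow] at this
    rw [pow_add]; omega
  have h5' : 5 ∣ 2 ^ m - 1 := by
    obtain ⟨k, rfl⟩ : ∃ k, m = 4 * k := ⟨m / 4, by omega⟩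
    have := Nat.ModEq.pow k (show 2 ^ 4 ≡ 1 [MOD 5] by decide)
    rw [Nat.ModEq, ← pow_mul, one_pow] at this
    omega
  obtain ⟨a, ha⟩ := h5
  obtain ⟨b, hb⟩ := h5'
  have hpos : 2 ^ 4 ≤ 2 ^ m := Nat.pow_le_pow_right (by norm_num) hm
  have hβ : (α ^ (1 + 2 ^ e)) ^ b = 1 := by
    rw [ha, ← pow_mul, show 5 * a * b = (2 ^ m - 1) * a by rw [hb]; ring, pow_mul, ← hα,
      pow_orderOf_eq_one, one_pow]
  have hdv : minpoly (ZMod 2) (α ^ (1 + 2 ^ e)) ∣ (X ^ b - 1 : (ZMod 2)[X]) := by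
    apply minpoly.dvd
    simp [hβ]
  have h0 : aeval α (X ^ b - 1 : (ZMod 2)[X]) = 0 := by
    obtain ⟨r, hr⟩ := hd.trans hdv
    rw [hr, map_mul, minpoly.aeval, zero_mul]
  have hab : α ^ b = 1 := by
    simpa [sub_eq_zero] using h0
  have := Nat.le_of_dvd (by omega) (orderOf_dvd_of_pow_eq_one hab)
  omega

lemma aux_mem (m e : ℕ) (hm4 : m % 4 = 0) (hm : 4 ≤ m)
    (hgcd : Nat.gcd m e = 2)
    (α : GaloisField 2 m) (hα : orderOf α = 2 ^ m - 1) (c : Fin (2 ^ m) → ZMod 2) :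
    c ∈ CEbar m e α ↔ ∑ i, c i = 0 ∧
      ∑ i, algebraMap (ZMod 2) (GaloisField 2 m) (c i) * loc m α i = 0 ∧
      ∑ i, algebraMap (ZMod 2) (GaloisField 2 m) (c i) * loc m α i ^ (1 + 2 ^ e) = 0 := by
  have key (k : ℕ) (hk : k ≠ 0) : minpoly (ZMod 2) (α ^ k) ∣
      codePoly (fun i : Fin (2 ^ m - 1) => c (Fin.castLE (Nat.sub_le _ _) i)) ↔
      ∑ i, algebraMap (ZMod 2) (GaloisField 2 m) (c i) * loc m α i ^ k = 0 := by
    rw [← aux_sum_castLE (2 ^ m) (by positivity)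
      (fun i => algebraMap (ZMod 2) (GaloisField 2 m) (c i) * loc m α i ^ k)
      (by intro i hi; simp [loc, hi, hk]), minpoly.dvd_iff]
    simp only [codePoly, map_sum, map_mul, aeval_C, map_pow, aeval_X]
    have : ∀ i : Fin (2 ^ m - 1), loc m α (Fin.castLE (Nat.sub_le _ _) i) = α ^ (i : ℕ) := by
      intro i; simp [loc]
    simp only [this, ← pow_mul, mul_comm k]
  have k1 := key 1 one_ne_zero
  have k2 := key (1 + 2 ^ e) (by positivity)
  simp only [pow_one] at k1
  rw [← k1, ← k2]
  simp only [CEbar, CE, gE, Set.mem_setOf_eq]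
  have hc := aux_coprime m e hm4 hm hgcd α hα
  constructor
  · rintro ⟨h, h0⟩
    exact ⟨h0, (dvd_mul_right _ _).trans h, (dvd_mul_left _ _).trans h⟩
  · rintro ⟨h0, h1, h2⟩
    exact ⟨hc.mul_dvd h1 h2, h0⟩

lemma aux_loc_bij (m : ℕ) (hm : 4 ≤ m)
    (α : GaloisField 2 m) (hα : orderOf α = 2 ^ m - 1) : Function.Bijective (loc m α) := by
  have hpos : 2 ^ 4 ≤ 2 ^ m := Nat.pow_le_pow_right (by norm_num) hm
  have hα0 : α ≠ 0 := by
    rintro rfl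
    rw [orderOf_zero] at hα
    omega
  have hfin : Finite (GaloisField 2 m) := inferInstance
  have : Fintype (GaloisField 2 m) := Fintype.ofFinite _
  rw [Fintype.bijective_iff_injective_and_card]
  constructor
  · intro i j hij
    have hi := i.2
    have hj := j.2
    ext
    simp only [loc] at hij
    split_ifs at hij with h1 h2 h2
    · exact pow_injOn_Iio_orderOf (by simpa [hα] using h1) (by simpa [hα] using h2) hij
    · exact absurd hij (pow_ne_zero _ hα0)
    · exact absurd hij.symm (pow_ne_zero _ hα0)
    · omega
  · rw [Fintype.card_fin, ← Nat.card_eq_fintype_card, GaloisField.card 2 m (by omega)]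

lemma aux_fwd {F : Type*} [Field F] [CharP F 2] (e : ℕ) (ω x y z w : F)
    (hF : ∀ t : F, t ^ (2 ^ e) = t → t = 0 ∨ t = 1 ∨ t = ω ∨ t = ω + 1)
    (h1 : x + y + z + w = 0)
    (h2 : x ^ (1 + 2 ^ e) + y ^ (1 + 2 ^ e) + z ^ (1 + 2 ^ e) + w ^ (1 + 2 ^ e) = 0)
    (hxy : x ≠ y) (hxz : x ≠ z) (hyz : y ≠ z) :
    z = x + ω * (x + y) ∨ z = x + (ω + 1) * (x + y) := by
  have two : (2 : F) = 0 := CharTwo.two_eq_zero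
  have hb : x + y ≠ 0 := fun h => hxy (by linear_combination h - y * two)
  have hw : w = x + y + z := by linear_combination h1 - (x + y + z) * two
  have fr (a b : F) : (a + b) ^ (2 ^ e) = a ^ (2 ^ e) + b ^ (2 ^ e) := add_pow_char_pow a b 2 e
  have ht : ((x + z) / (x + y)) ^ (2 ^ e) = (x + z) / (x + y) := by
    rw [div_pow, div_eq_div_iff (pow_ne_zero _ hb) hb]
    subst hw
    simp only [pow_add, pow_one, fr] at h2 ⊢
    generalize x ^ 2 ^ e = X at *
    generalize y ^ 2 ^ e = Y at *
    generalize z ^ 2 ^ e = Z at *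
    grind
  have hz : z = x + (x + z) / (x + y) * (x + y) := by
    rw [div_mul_cancel₀ _ hb]; linear_combination - x * two
  rcases hF _ ht with h | h | h | h
  · rw [h] at hz; exact absurd (by simpa using hz.symm) hxz
  · rw [h] at hz; exact absurd (by linear_combination -hz - x * two) hyz
  · left; rwa [h] at hz
  · right; rwa [h] at hz

lemma aux_bwd {F : Type*} [Field F] [CharP F 2] (e : ℕ) (ω x y : F)
    (hω : ω ^ (2 ^ e) = ω) :
    x ^ (1 + 2 ^ e) + y ^ (1 + 2 ^ e) + (x + ω * (x + y)) ^ (1 + 2 ^ e) +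
      (x + (ω + 1) * (x + y)) ^ (1 + 2 ^ e) = 0 := by
  have two : (2 : F) = 0 := CharTwo.two_eq_zero
  have fr (a b : F) : (a + b) ^ (2 ^ e) = a ^ (2 ^ e) + b ^ (2 ^ e) := add_pow_char_pow a b 2 e
  simp only [pow_add, pow_one, fr, mul_pow, hω, one_pow]
  generalize x ^ 2 ^ e = X at *
  generalize y ^ 2 ^ e = Y at *
  grind

lemma aux_omega (m e : ℕ) (hm : 4 ≤ m)
    (hgcd : Nat.gcd m e = 2)
    (α : GaloisField 2 m) (hα : orderOf α = 2 ^ m - 1) :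
    ∃ ω : GaloisField 2 m, ω ^ (2 ^ e) = ω ∧ ω ≠ 0 ∧ ω ≠ 1 ∧
      ∀ t, t ^ (2 ^ e) = t → t = 0 ∨ t = 1 ∨ t = ω ∨ t = ω + 1 := by
  have hpos : 2 ^ 4 ≤ 2 ^ m := Nat.pow_le_pow_right (by norm_num) hm
  have two : (2 : GaloisField 2 m) = 0 := CharTwo.two_eq_zero
  have h3 : ∀ k, 2 ∣ k → 3 ∣ 2 ^ k - 1 := by
    rintro _ ⟨k, rfl⟩
    have := Nat.ModEq.pow k (show 2 ^ 2 ≡ 1 [MOD 3] by decide)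
    rw [Nat.ModEq, ← pow_mul, one_pow] at this
    omega
  obtain ⟨b, hb⟩ := h3 m (hgcd ▸ Nat.gcd_dvd_left m e)
  obtain ⟨a, ha⟩ := h3 e (hgcd ▸ Nat.gcd_dvd_right m e)
  have hepos : 0 < 2 ^ e := by positivity
  have hω3 : (α ^ b) ^ 3 = 1 := by
    rw [← pow_mul, mul_comm, ← hb, ← hα, pow_orderOf_eq_one]
  have hω1 : α ^ b ≠ 1 := by
    intro h
    have := Nat.le_of_dvd (by omega) (orderOf_dvd_of_pow_eq_one h)
    omega
  have cub : ∀ t : GaloisField 2 m, t ^ 3 = 1 → t ≠ 1 → t ^ 2 + t + 1 = 0 := by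
    intro t ht h1
    have : (t - 1) * (t ^ 2 + t + 1) = 0 := by linear_combination ht
    exact (mul_eq_zero.1 this).resolve_left (sub_ne_zero.2 h1)
  refine ⟨α ^ b, ?_, ?_, hω1, ?_⟩
  · rw [show 2 ^ e = 3 * a + 1 by omega, pow_succ, pow_mul, hω3, one_pow, one_mul]
  · intro h; rw [h] at hω3; simp at hω3
  · intro t ht
    by_cases t0 : t = 0
    · exact Or.inl t0
    by_cases t1 : t = 1
    · exact Or.inr (Or.inl t1)
    right; right
    have hte : t ^ (2 ^ e - 1) = 1 := by
      apply mul_right_cancel₀ t0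
      rw [← pow_succ, Nat.sub_add_cancel hepos, ht, one_mul]
    have : Fintype (GaloisField 2 m) := Fintype.ofFinite _
    have htm : t ^ (2 ^ m - 1) = 1 := by
      have := FiniteField.pow_card_sub_one_eq_one t t0
      rwa [← Nat.card_eq_fintype_card, GaloisField.card 2 m (by omega)] at this
    have hd := Nat.dvd_gcd (orderOf_dvd_of_pow_eq_one htm) (orderOf_dvd_of_pow_eq_one hte)
    rw [Nat.pow_sub_one_gcd_pow_sub_one, hgcd] at hd
    have ht3 : t ^ 3 = 1 := orderOf_dvd_iff_pow_eq_one.1 hd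
    have e1 := cub t ht3 t1
    have e2 := cub _ hω3 hω1
    have : (t - α ^ b) * (t - (α ^ b + 1)) = 0 := by
      linear_combination e1 + e2 - (t * (α ^ b) + t + 1) * two
    rcases mul_eq_zero.1 this with h | h
    · exact Or.inl (sub_eq_zero.1 h)
    · exact Or.inr (sub_eq_zero.1 h)

/-- indicator vector -/
def indv {N : ℕ} (S : Finset (Fin N)) : Fin N → ZMod 2 := fun i => if i ∈ S then 1 else 0

lemma indv_support {N : ℕ} (c : Fin N → ZMod 2) : c = indv (univ.filter (fun i => c i ≠ 0)) := by
  funext i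
  simp only [indv, Finset.mem_filter, Finset.mem_univ, true_and]
  generalize c i = a
  revert a
  decide

lemma indv_norm {N : ℕ} (S : Finset (Fin N)) : hammingNorm (indv S) = S.card := by
  simp [hammingNorm, indv]

lemma indv_sum {N : ℕ} {F : Type*} [Field F] [Algebra (ZMod 2) F] (S : Finset (Fin N))
    (f : Fin N → F) : ∑ i, algebraMap (ZMod 2) F (indv S i) * f i = ∑ i ∈ S, f i := by
  simp [indv, apply_ite, ite_mul, Finset.sum_ite_mem]

lemma sum4 {N : ℕ} {F : Type*} [AddCommMonoid F] (i j k l : Fin N) (f : Fin N → F)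
    (hij : i ≠ j) (hik : i ≠ k) (hil : i ≠ l) (hjk : j ≠ k) (hjl : j ≠ l) (hkl : k ≠ l) :
    ∑ t ∈ ({i, j, k, l} : Finset (Fin N)), f t = f i + f j + f k + f l := by
  rw [Finset.sum_insert (by simp [*]), Finset.sum_insert (by simp [*]),
    Finset.sum_insert (by simp [*]), Finset.sum_singleton]
  simp only [add_assoc]

/-- For `m ≡ 0 (mod 4)`, `m ≥ 4`, `2 ≤ e ≤ m/2` with `gcd(m,e) = 2`,
the supports of the weight-4 codewords of `C̄_E` form a Steiner system `S(2, 4, 2^m)`: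
every 2-element subset of the `2^m` coordinate positions is contained in the support of
exactly one codeword of Hamming weight 4. -/
theorem steiner_system_S_2_4_2m_of_mod_four_eq_zero
    (m e : ℕ) (hm4 : m % 4 = 0) (hm : 4 ≤ m)
    (he2 : 2 ≤ e) (heM : 2 * e ≤ m) (hgcd : Nat.gcd m e = 2)
    (α : GaloisField 2 m) (hα : orderOf α = 2 ^ m - 1) :
    ∀ T : Finset (Fin (2 ^ m)), T.card = 2 →
      {c : Fin (2 ^ m) → ZMod 2 |
        c ∈ CEbar m e α ∧ hammingNorm c = 4 ∧ ∀ i ∈ T, c i ≠ 0}.ncard = 1 := by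
  intro T hT
  obtain ⟨i, j, hij, rfl⟩ := Finset.card_eq_two.1 hT
  obtain ⟨ω, hωe, hω0, hω1, hF⟩ := aux_omega m e hm hgcd α hα
  have hbij := aux_loc_bij m hm α hα
  have two : (2 : GaloisField 2 m) = 0 := CharTwo.two_eq_zero
  obtain ⟨k, hk⟩ := hbij.2 (loc m α i + ω * (loc m α i + loc m α j))
  obtain ⟨l, hl⟩ := hbij.2 (loc m α i + (ω + 1) * (loc m α i + loc m α j))
  have hxy : loc m α i ≠ loc m α j := fun h => hij (hbij.1 h)
  have hb : loc m α i + loc m α j ≠ 0 :=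
    fun h => hxy (by linear_combination h - loc m α j * two)
  have hω1' : ω + 1 ≠ 0 := fun h => hω1 (by linear_combination h - two)
  have hik : i ≠ k := by
    rintro rfl
    exact mul_ne_zero hω0 hb (by linear_combination -hk)
  have hil : i ≠ l := by
    rintro rfl
    exact mul_ne_zero hω1' hb (by linear_combination -hl)
  have hjk : j ≠ k := by
    rintro rfl
    exact mul_ne_zero hω1' hb (by linear_combination -hk + loc m α j * two)
  have hjl : j ≠ l := by
    rintro rfl
    exact mul_ne_zero hω0 hb (by linear_combination -hl - loc m α i * two)
  have hkl : k ≠ l := by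
    rintro rfl
    exact hb (by linear_combination hk - hl)
  rw [Set.ncard_eq_one]
  refine ⟨indv {i, j, k, l}, ?_⟩
  ext c
  rw [Set.mem_setOf_eq, Set.mem_singleton_iff, aux_mem m e hm4 hm hgcd α hα]
  constructor
  · rintro ⟨⟨-, h1, h2⟩, hn, hT'⟩
    have hc := indv_support c
    set S := univ.filter (fun i => c i ≠ 0) with hS
    have hiS : i ∈ S := by simpa [hS] using hT' i (by simp)
    have hjS : j ∈ S := by simpa [hS] using hT' j (by simp)
    rw [hc, indv_sum] at h1 h2
    rw [hc, indv_norm] at hn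
    clear_value S
    have hsub : ({i, j} : Finset _) ⊆ S := by
      intro t; simp only [Finset.mem_insert, Finset.mem_singleton]
      rintro (rfl | rfl) <;> assumption
    have hcard : (S \ {i, j}).card = 2 := by
      rw [Finset.card_sdiff_of_subset hsub, hn, hT]
    obtain ⟨p, r, hpr, hSd⟩ := Finset.card_eq_two.1 hcard
    have hp : p ∈ S \ {i, j} := by simp [hSd]
    have hr : r ∈ S \ {i, j} := by simp [hSd]
    simp only [Finset.mem_sdiff, Finset.mem_insert, Finset.mem_singleton, not_or] at hp hr
    have hS4 : S = {i, j, p, r} := by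
      rw [← Finset.union_sdiff_of_subset hsub, hSd]
      rw [Finset.insert_union, Finset.singleton_union]
    rw [hS4, sum4 i j p r _ hij (Ne.symm hp.2.1) (Ne.symm hr.2.1) (Ne.symm hp.2.2)
      (Ne.symm hr.2.2) hpr] at h1 h2
    have ne {a b} (h : a ≠ b) : loc m α a ≠ loc m α b := fun h' => h (hbij.1 h')
    have zp := aux_fwd e ω _ _ _ _ hF h1 h2 hxy (ne (Ne.symm hp.2.1)) (ne (Ne.symm hp.2.2))
    have zr := aux_fwd e ω _ _ _ (loc m α p) hF (by linear_combination h1)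
      (by linear_combination h2) hxy (ne (Ne.symm hr.2.1)) (ne (Ne.symm hr.2.2))
    rw [← hk, ← hl, hbij.1.eq_iff, hbij.1.eq_iff] at zp zr
    rw [hc, hS4]
    rcases zp with rfl | rfl <;> rcases zr with rfl | rfl
    · exact absurd rfl hpr
    · rfl
    · rw [Finset.pair_comm]
    · exact absurd rfl hpr
  · rintro rfl
    refine ⟨⟨?_, ?_, ?_⟩, ?_, ?_⟩
    · have := indv_sum (F := ZMod 2) {i, j, k, l} (fun _ => 1)
      rw [sum4 i j k l _ hij hik hil hjk hjl hkl] at this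
      simp only [Algebra.algebraMap_self, RingHom.id_apply, mul_one] at this
      rw [this]; decide
    · rw [indv_sum, sum4 i j k l _ hij hik hil hjk hjl hkl, hk, hl]
      linear_combination (loc m α i * 2 + loc m α j + ω * (loc m α i + loc m α j)) * two
    · rw [indv_sum, sum4 i j k l _ hij hik hil hjk hjl hkl, hk, hl]
      exact aux_bwd e ω _ _ hωe
    · rw [indv_norm]
      rw [Finset.card_insert_of_notMem (by simp [*]), Finset.card_insert_of_notMem (by simp [*]),
        Finset.card_pair hkl]
    · intro t ht
      have : t ∈ ({i, j, k, l} : Finset _) := by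
        simp only [Finset.mem_insert, Finset.mem_singleton] at ht ⊢
        rcases ht with h | h
        · exact Or.inl h
        · exact Or.inr (Or.inl h)
      simp [indv, this]
end

section
/- Let m ≥ 4 be even, and let e be an integer with 2 ≤ e ≤ m/2 and gcd(m,e) = 2. Then the supports of the codewords of Hamming weight 4 in the extended code C̄_E form a 2-(2^m, 4, 1) design, i.e., a Steiner system S(2,4,2^m): every 2-element subset of the 2^m coordinate positions is contained in the support of exactly one codeword of Hamming weight 4 of C̄_E. -/
open Polynomial Finset

lemma quad_identity {F : Type*} [Field F] [CharP F 2] (e : ℕ) (x y z : F) :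
    x ^ (1 + 2 ^ e) + y ^ (1 + 2 ^ e) + z ^ (1 + 2 ^ e) + (x + y + z) ^ (1 + 2 ^ e)
      = (x + y) ^ (2 ^ e) * (x + z) + (x + y) * (x + z) ^ (2 ^ e) := by
  have h2 : (2 : F) = 0 := CharTwo.two_eq_zero
  simp only [pow_add, pow_one, add_pow_char_pow]
  generalize x ^ 2 ^ e = X
  generalize y ^ 2 ^ e = Y
  generalize z ^ 2 ^ e = Z
  linear_combination (y * Y + z * Z) * h2

lemma pow_three_of {F : Type*} [Field F] (m e : ℕ) (hgcd : Nat.gcd m e = 2) (t : F)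
    (h1 : t ^ (2 ^ m - 1) = 1) (h2 : t ^ (2 ^ e - 1) = 1) : t ^ 3 = 1 := by
  have h : t ^ Nat.gcd (2 ^ m - 1) (2 ^ e - 1) = 1 := pow_gcd_eq_one.2 ⟨h1, h2⟩
  rw [Nat.pow_sub_one_gcd_pow_sub_one, hgcd] at h
  exact h

lemma uniq_core {F : Type*} [Field F] [CharP F 2] (m e : ℕ) (hgcd : Nat.gcd m e = 2)
    (hF : ∀ t : F, t ≠ 0 → t ^ (2 ^ m - 1) = 1)
    (ω : F) (hω : ω ^ 2 + ω + 1 = 0) (x y z w : F) (hxy : x ≠ y) (hxz : x ≠ z) (hyz : y ≠ z)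
    (h1 : x + y + z + w = 0)
    (h2 : x ^ (1 + 2 ^ e) + y ^ (1 + 2 ^ e) + z ^ (1 + 2 ^ e) + w ^ (1 + 2 ^ e) = 0) :
    (z = x + ω * (x + y) ∧ w = y + ω * (x + y)) ∨
    (w = x + ω * (x + y) ∧ z = y + ω * (x + y)) := by
  have two : (2 : F) = 0 := CharTwo.two_eq_zero
  have hw : w = x + y + z := by linear_combination h1 - (x + y + z) * two
  rw [hw, quad_identity] at h2
  have ha : x + y ≠ 0 := by rwa [Ne, CharTwo.add_eq_zero]
  have hb : x + z ≠ 0 := by rwa [Ne, CharTwo.add_eq_zero]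
  have hq : 1 ≤ 2 ^ e := Nat.one_le_two_pow
  obtain ⟨t, ht⟩ : ∃ t, t = (x + z) / (x + y) := ⟨_, rfl⟩
  have hbt : x + z = t * (x + y) := by rw [ht]; field_simp
  have ht0 : t ≠ 0 := by rintro rfl; apply hb; rw [hbt]; ring
  have ht1 : t ≠ 1 := by
    rintro rfl
    apply hyz
    linear_combination -hbt
  have e1 : t ^ (2 ^ e - 1) = 1 := by
    rw [hbt, mul_pow] at h2
    have h3 : (x + y) ^ (2 ^ e) * (x + y) * (t + t ^ (2 ^ e)) = 0 := by
      linear_combination h2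
    have h4 : t + t ^ (2 ^ e) = 0 := by
      rcases mul_eq_zero.1 h3 with h | h
      · exact absurd h (mul_ne_zero (pow_ne_zero _ ha) ha)
      · exact h
    rw [CharTwo.add_eq_zero] at h4
    have h5 : t * t ^ (2 ^ e - 1) = t * 1 := by
      rw [← pow_succ', Nat.sub_add_cancel hq, ← h4, mul_one]
    exact mul_left_cancel₀ ht0 h5
  have e3 := pow_three_of m e hgcd t (hF t ht0) e1
  have e4 : t ^ 2 + t + 1 = 0 := by
    have : (t - 1) * (t ^ 2 + t + 1) = 0 := by linear_combination e3
    exact (mul_eq_zero.1 this).resolve_left (sub_ne_zero.2 ht1)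
  have e5 : (t - ω) * (t - ω - 1) = 0 := by
    linear_combination e4 + hω - (t * ω + t + 1) * two
  rcases mul_eq_zero.1 e5 with h | h
  · left
    have : t = ω := by linear_combination h
    subst this
    constructor
    · linear_combination hbt - x * two
    · rw [hw]; linear_combination hbt
  · right
    have : t = ω + 1 := by linear_combination h
    subst this
    constructor
    · rw [hw]; linear_combination hbt + y * two
    · linear_combination hbt

lemma sum_split {M : Type*} [AddCommMonoid M] (n N : ℕ) (h : N = n + 1) (hle : n ≤ N)
    (f : Fin N → M) :
    ∑ i, f i = ∑ i : Fin n, f (Fin.castLE hle i) + f ⟨n, by omega⟩ := by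
  subst h
  rw [Fin.sum_univ_castSucc]
  rfl

/-- locators -/
noncomputable def locPhi (m : ℕ) (α : GaloisField 2 m) (i : Fin (2 ^ m)) : GaloisField 2 m :=
  if (i : ℕ) < 2 ^ m - 1 then α ^ (i : ℕ) else 0

lemma locPhi_bij (m : ℕ) (hm : 4 ≤ m) (α : GaloisField 2 m) (hα : orderOf α = 2 ^ m - 1) :
    Function.Bijective (locPhi m α) := by
  classical
  have : Fintype (GaloisField 2 m) := Fintype.ofFinite _
  have hα0 : α ≠ 0 := by
    rintro rfl
    have : (2:ℕ) ^ 4 ≤ 2 ^ m := Nat.pow_le_pow_right (by norm_num) hm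
    have h0 : (0 : GaloisField 2 m) ^ (2 ^ m - 1) = 1 := by rw [← hα]; exact pow_orderOf_eq_one _
    rw [zero_pow (by omega)] at h0
    exact zero_ne_one h0
  rw [Fintype.bijective_iff_injective_and_card]
  constructor
  · intro i j hij
    unfold locPhi at hij
    have hi := i.2
    have hj := j.2
    split_ifs at hij with h1 h2 h2
    · apply Fin.ext
      exact pow_injOn_Iio_orderOf (by rw [Set.mem_Iio, hα]; exact h1)
        (by rw [Set.mem_Iio, hα]; exact h2) hij
    · exact absurd hij (pow_ne_zero _ hα0)
    · exact absurd hij.symm (pow_ne_zero _ hα0)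
    · apply Fin.ext; omega
  · rw [Fintype.card_fin, ← Nat.card_eq_fintype_card, GaloisField.card 2 m (by omega)]

lemma minpoly_ne (m e : ℕ) (hm : 4 ≤ m) (he2 : 2 ≤ e) (heM : 2 * e ≤ m)
    (α : GaloisField 2 m) (hα : orderOf α = 2 ^ m - 1) :
    minpoly (ZMod 2) α ≠ minpoly (ZMod 2) (α ^ (1 + 2 ^ e)) := by
  intro h
  have hbij := locPhi_bij m hm α hα
  have hc : IsConjRoot (ZMod 2) (α ^ (1 + 2 ^ e)) α := h.symm
  rw [isConjRoot_iff_exists_algEquiv] at hc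
  obtain ⟨σ, hσ⟩ := hc
  have hτ : ∀ x, σ x = x ^ (1 + 2 ^ e) := by
    intro x
    obtain ⟨i, rfl⟩ := hbij.2 x
    unfold locPhi
    split_ifs
    · rw [map_pow, hσ, ← pow_mul, ← pow_mul, mul_comm]
    · rw [map_zero, zero_pow (by positivity)]
  have h1 : σ (α + 1) = σ α + σ 1 := map_add _ _ _
  rw [hτ, hτ, hτ] at h1
  simp only [pow_add, pow_one, add_pow_char_pow, one_pow] at h1
  have h2 : α + α ^ (2 ^ e) = 0 := by linear_combination h1
  rw [CharTwo.add_eq_zero] at h2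
  have p1 : (2:ℕ) ^ 2 ≤ 2 ^ e := Nat.pow_le_pow_right (by norm_num) he2
  have p2 : (2:ℕ) ^ e < 2 ^ m := Nat.pow_lt_pow_right (by norm_num) (by omega)
  have := pow_injOn_Iio_orderOf (x := α)
  by_cases hlt : 2 ^ e < 2 ^ m - 1
  · have := @this 1 (by rw [Set.mem_Iio, hα]; omega) (2 ^ e) (by rw [Set.mem_Iio, hα]; omega) (by simpa using h2)
    omega
  · have : (2:ℕ) ^ (e + 1) ≤ 2 ^ m := Nat.pow_le_pow_right (by norm_num) (by omega)
    rw [pow_succ] at this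
    omega

lemma gE_dvd_iff (m e : ℕ) (hm : 4 ≤ m) (he2 : 2 ≤ e) (heM : 2 * e ≤ m)
    (α : GaloisField 2 m) (hα : orderOf α = 2 ^ m - 1) (p : Polynomial (ZMod 2)) :
    gE m e α ∣ p ↔ aeval α p = 0 ∧ aeval (α ^ (1 + 2 ^ e)) p = 0 := by
  have i1 : IsIntegral (ZMod 2) α := IsIntegral.of_finite _ _
  have i2 : IsIntegral (ZMod 2) (α ^ (1 + 2 ^ e)) := IsIntegral.of_finite _ _
  rw [← minpoly.dvd_iff, ← minpoly.dvd_iff]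
  have hcop : IsCoprime (minpoly (ZMod 2) α) (minpoly (ZMod 2) (α ^ (1 + 2 ^ e))) := by
    rw [(minpoly.irreducible i1).coprime_iff_not_dvd]
    intro hd
    exact minpoly_ne m e hm he2 heM α hα
      (eq_of_monic_of_associated (minpoly.monic i1) (minpoly.monic i2)
        ((minpoly.irreducible i1).associated_of_dvd (minpoly.irreducible i2) hd))
  constructor
  · intro h
    exact ⟨(dvd_mul_right _ _).trans h, (dvd_mul_left _ _).trans h⟩
  · rintro ⟨h, h'⟩
    exact hcop.mul_dvd h h'

lemma mem_CEbar_iff (m e : ℕ) (hm : 4 ≤ m) (he2 : 2 ≤ e) (heM : 2 * e ≤ m)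
    (α : GaloisField 2 m) (hα : orderOf α = 2 ^ m - 1) (c : Fin (2 ^ m) → ZMod 2) :
    c ∈ CEbar m e α ↔ (∑ i, algebraMap (ZMod 2) (GaloisField 2 m) (c i) * locPhi m α i = 0 ∧
      ∑ i, algebraMap (ZMod 2) (GaloisField 2 m) (c i) * locPhi m α i ^ (1 + 2 ^ e) = 0) ∧
      ∑ i, c i = 0 := by
  have hN : 2 ^ m = (2 ^ m - 1) + 1 := by
    have : 1 ≤ 2 ^ m := Nat.one_le_two_pow
    omega
  unfold CEbar CE
  rw [Set.mem_ofPred_eq, Set.mem_ofPred_eq, gE_dvd_iff m e hm he2 heM α hα,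
    sum_split (2 ^ m - 1) (2 ^ m) hN (Nat.sub_le _ _)
      (fun i => algebraMap (ZMod 2) (GaloisField 2 m) (c i) * locPhi m α i),
    sum_split (2 ^ m - 1) (2 ^ m) hN (Nat.sub_le _ _)
      (fun i => algebraMap (ZMod 2) (GaloisField 2 m) (c i) * locPhi m α i ^ (1 + 2 ^ e))]
  have hp : ∀ k : ℕ, (α ^ k) ^ (1 + 2 ^ e) = (α ^ (1 + 2 ^ e)) ^ k := fun k => pow_right_comm _ _ _
  simp [codePoly, locPhi, hp]

lemma sum_supp (m : ℕ) {ι : Type*} [Fintype ι] (c : ι → ZMod 2) (f : ι → GaloisField 2 m) :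
    ∑ i, algebraMap (ZMod 2) (GaloisField 2 m) (c i) * f i = ∑ i with c i ≠ 0, f i := by
  rw [Finset.sum_filter]
  apply Finset.sum_congr rfl
  intro i _
  have : ∀ a : ZMod 2, a = 0 ∨ a = 1 := by decide
  rcases this (c i) with h | h <;> simp [h]

lemma sum_supp' {ι : Type*} [Fintype ι] (c : ι → ZMod 2) :
    ∑ i, c i = ((#{i | c i ≠ 0} : ℕ) : ZMod 2) := by
  rw [Finset.card_filter, Nat.cast_sum]
  apply Finset.sum_congr rfl
  intro i _
  have : ∀ a : ZMod 2, a = 0 ∨ a = 1 := by decide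
  rcases this (c i) with h | h <;> simp [h]

/-- For even `m ≥ 4` and `2 ≤ e ≤ m/2` with `gcd(m,e) = 2`,
the supports of the weight-4 codewords of `C̄_E` form a Steiner system `S(2, 4, 2^m)`. -/
theorem steiner_system_S_2_4_2m_of_even
    (m e : ℕ) (hm : 4 ≤ m) (hmeven : m % 2 = 0)
    (he2 : 2 ≤ e) (heM : 2 * e ≤ m) (hgcd : Nat.gcd m e = 2)
    (α : GaloisField 2 m) (hα : orderOf α = 2 ^ m - 1) :
    ∀ T : Finset (Fin (2 ^ m)), T.card = 2 →
      {c : Fin (2 ^ m) → ZMod 2 |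
        c ∈ CEbar m e α ∧ hammingNorm c = 4 ∧ ∀ i ∈ T, c i ≠ 0}.ncard = 1 := by
  intro T hT
  have two : (2 : GaloisField 2 m) = 0 := CharTwo.two_eq_zero
  have hbij := locPhi_bij m hm α hα
  obtain ⟨i, j, hij, rfl⟩ := Finset.card_eq_two.1 hT
  -- every nonzero element satisfies t^(2^m-1) = 1
  have hF : ∀ t : GaloisField 2 m, t ≠ 0 → t ^ (2 ^ m - 1) = 1 := by
    intro t ht
    have : Fintype (GaloisField 2 m) := Fintype.ofFinite _
    have := FiniteField.pow_card_sub_one_eq_one t ht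
    rwa [← Nat.card_eq_fintype_card, GaloisField.card 2 m (by omega)] at this
  -- a primitive cube root of unity
  have d3 : ∀ k, 2 ∣ k → 3 ∣ 2 ^ k - 1 := by
    rintro k ⟨l, rfl⟩
    rw [pow_mul]
    have := Nat.sub_dvd_pow_sub_pow (2 ^ 2) 1 l
    rwa [one_pow] at this
  obtain ⟨ω, hω⟩ : ∃ ω : GaloisField 2 m, ω ^ 2 + ω + 1 = 0 := by
    obtain ⟨k, hk⟩ := d3 m (by omega)
    have p4 : (2:ℕ) ^ 4 ≤ 2 ^ m := Nat.pow_le_pow_right (by norm_num) hm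
    refine ⟨α ^ k, ?_⟩
    have h3 : (α ^ k) ^ 3 = 1 := by
      rw [← pow_mul, mul_comm, ← hk, ← hα, pow_orderOf_eq_one]
    have hne : α ^ k ≠ 1 := by
      intro h
      have := Nat.le_of_dvd (by omega) (orderOf_dvd_of_pow_eq_one h)
      omega
    have : (α ^ k - 1) * ((α ^ k) ^ 2 + α ^ k + 1) = 0 := by linear_combination h3
    exact (mul_eq_zero.1 this).resolve_left (sub_ne_zero.2 hne)
  have hω3 : ω ^ 3 = 1 := by linear_combination (ω - 1) * hω
  have hω0 : ω ≠ 0 := by rintro rfl; simp at hω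
  have hω1 : ω + 1 ≠ 0 := by
    intro h
    have : ω ^ 2 = 0 := by linear_combination hω - h
    exact hω0 (pow_eq_zero_iff (by norm_num) |>.1 this)
  have hωq : ω ^ (2 ^ e) = ω := by
    obtain ⟨k, hk⟩ := d3 e (hgcd ▸ Nat.gcd_dvd_right m e)
    have : 2 ^ e = 3 * k + 1 := by
      have : 1 ≤ 2 ^ e := Nat.one_le_two_pow
      omega
    rw [this, pow_succ, pow_mul, hω3, one_pow, one_mul]
  set φ := locPhi m α with hφ
  have hxy : φ i ≠ φ j := fun h => hij (hbij.1 h)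
  have ha : φ i + φ j ≠ 0 := by rwa [Ne, CharTwo.add_eq_zero]
  obtain ⟨k, hk⟩ := hbij.2 (φ i + ω * (φ i + φ j))
  obtain ⟨l, hl⟩ := hbij.2 (φ j + ω * (φ i + φ j))
  have hik : i ≠ k := by
    rintro rfl
    have : ω * (φ i + φ j) = 0 := by linear_combination -hk
    exact mul_ne_zero hω0 ha this
  have hil : i ≠ l := by
    rintro rfl
    have : (ω + 1) * (φ i + φ j) = 0 := by linear_combination -hl + φ i * two
    exact mul_ne_zero hω1 ha this
  have hjk : j ≠ k := by
    rintro rfl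
    have : (ω + 1) * (φ i + φ j) = 0 := by linear_combination -hk + φ j * two
    exact mul_ne_zero hω1 ha this
  have hjl : j ≠ l := by
    rintro rfl
    have : ω * (φ i + φ j) = 0 := by linear_combination -hl
    exact mul_ne_zero hω0 ha this
  have hkl : k ≠ l := by
    rintro rfl
    exact hxy (by linear_combination hl - hk)
  have hsum4 : ∀ {a b c d : Fin (2 ^ m)} (f : Fin (2 ^ m) → GaloisField 2 m), a ≠ b → a ≠ c →
      a ≠ d → b ≠ c → b ≠ d → c ≠ d →
      ∑ x ∈ ({a, b, c, d} : Finset (Fin (2 ^ m))), f x = f a + f b + f c + f d := by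
    intro a b c d f h1 h2 h3 h4 h5 h6
    rw [Finset.sum_insert (by simp [*]), Finset.sum_insert (by simp [*]), Finset.sum_pair h6]
    ring
  rw [Set.ncard_eq_one]
  refine ⟨fun x => if x ∈ ({i, j, k, l} : Finset (Fin (2 ^ m))) then 1 else 0, ?_⟩
  ext c
  rw [Set.mem_ofPred_eq, Set.mem_singleton_iff, mem_CEbar_iff m e hm he2 heM α hα, sum_supp,
    sum_supp, sum_supp', ← hφ]
  have hn : hammingNorm c = #{x | c x ≠ 0} := rfl
  constructor
  · rintro ⟨⟨⟨h1, h2⟩, -⟩, h4, hsub⟩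
    rw [hn] at h4
    obtain ⟨S, hS⟩ : ∃ S : Finset (Fin (2 ^ m)), S = Finset.univ.filter (fun x => c x ≠ 0) := ⟨_, rfl⟩
    rw [← hS] at h1 h2 h4
    have hmem : ∀ x, x ∈ S ↔ c x ≠ 0 := by intro x; rw [hS]; simp
    have hsubS : {i, j} ⊆ S := fun x hx => (hmem x).2 (hsub x hx)
    have hcd : #(S \ {i, j}) = 2 := by rw [Finset.card_sdiff_of_subset hsubS, h4, hT]
    obtain ⟨u, v, huv, hd⟩ := Finset.card_eq_two.1 hcd
    have hSe : S = {i, j, u, v} := by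
      rw [← Finset.union_sdiff_of_subset hsubS, hd]; ext x; simp; tauto
    have hu : u ∈ S \ {i, j} := by rw [hd]; simp
    have hv : v ∈ S \ {i, j} := by rw [hd]; simp
    simp only [Finset.mem_sdiff, Finset.mem_insert, Finset.mem_singleton, not_or] at hu hv
    have n1 := Ne.symm hu.2.1
    have n2 := Ne.symm hu.2.2
    have n3 := Ne.symm hv.2.1
    have n4 := Ne.symm hv.2.2
    rw [hSe, hsum4 _ hij n1 n3 n2 n4 huv] at h1 h2
    have hfin : S = {i, j, k, l} := by
      rcases uniq_core m e hgcd hF ω hω _ _ _ _ hxy (fun h => n1 (hbij.1 h))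
        (fun h => n2 (hbij.1 h)) h1 h2 with ⟨g1, g2⟩ | ⟨g1, g2⟩
      · have : u = k := hbij.1 (g1.trans hk.symm)
        have : v = l := hbij.1 (g2.trans hl.symm)
        subst u v
        exact hSe
      · have : v = k := hbij.1 (g1.trans hk.symm)
        have : u = l := hbij.1 (g2.trans hl.symm)
        subst u v
        rw [hSe, Finset.pair_comm l k]
    funext x
    have h01 : ∀ a : ZMod 2, a ≠ 0 → a = 1 := by decide
    rw [← hfin]
    split_ifs with hx
    · exact h01 _ ((hmem x).1 hx)
    · by_contra h
      exact hx ((hmem x).2 h)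
  · intro hc
    have hS : ({x | c x ≠ 0} : Finset (Fin (2 ^ m))) = {i, j, k, l} := by
      ext x
      rw [Finset.mem_filter_univ, hc]
      by_cases hx : x ∈ ({i, j, k, l} : Finset (Fin (2 ^ m)))
      · simp only [hx, if_true]; simp
      · simp only [hx, if_false]; simp
    have hcard : #({i, j, k, l} : Finset (Fin (2 ^ m))) = 4 := by
      rw [Finset.card_insert_of_notMem (by simp [*]), Finset.card_insert_of_notMem (by simp [*]),
        Finset.card_pair hkl]
    rw [hn, hS, hsum4 _ hij hik hil hjk hjl hkl, hsum4 _ hij hik hil hjk hjl hkl, hcard]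
    have hl' : φ l = φ i + φ j + φ k := by rw [hk, hl]; linear_combination -φ i * two
    refine ⟨⟨⟨?_, ?_⟩, by decide⟩, rfl, ?_⟩
    · rw [hl']; linear_combination (φ i + φ j + φ k) * two
    · rw [hl', quad_identity]
      have : φ i + φ k = ω * (φ i + φ j) := by rw [hk]; linear_combination φ i * two
      rw [this, mul_pow, hωq]
      linear_combination ω * (φ i + φ j) * (φ i + φ j) ^ 2 ^ e * two
    · intro x hx
      rw [hc]
      simp only [Finset.mem_insert, Finset.mem_singleton] at hx
      rcases hx with rfl | rfl <;> simp
end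

section
/- Let m ≡ 0 (mod 4), and let e be an integer with 2 ≤ e ≤ ⌊m/2⌋ and gcd(m,e) = 2. Then the supports of the codewords of Hamming weight 8 in the extended code C̄_E form a 2-(2^m, 8, λ) design with λ = (2^{4m−4} − 27·2^{3m−4} + 23·2^{2m−1} + 261·2^{m−2} + 403)/45: every 2-element subset of the 2^m coordinate positions is contained in the support of exactly this number λ of codewords of Hamming weight 8 of C̄_E. -/
open Polynomial Finset

lemma exists_char (F : Type) [Field F] [Fintype F] [Algebra (ZMod 2) F] :
    ∃ ψ : AddChar F ℤ, (∀ x, ψ x * ψ x = 1) ∧ (∀ x, ψ (x ^ 2) = ψ x) ∧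
      ∀ a : F, a ≠ 0 → ∃ b, ψ (a * b) ≠ 1 := by
  have hχ : ((-1 : ℤ)) ^ 2 = 1 := by norm_num
  let χ : AddChar (ZMod 2) ℤ := AddChar.zmodChar 2 hχ
  have hχ2 : ∀ t : ZMod 2, χ t * χ t = 1 := by
    intro t
    rw [AddChar.zmodChar_apply, ← mul_pow]; norm_num
  have hχ1 : ∀ t : ZMod 2, t ≠ 0 → χ t ≠ 1 := by
    intro t ht
    have : t = 1 := by revert t; decide
    rw [this, AddChar.zmodChar_apply]
    decide
  let ψ : AddChar F ℤ := χ.compAddMonoidHom (Algebra.trace (ZMod 2) F).toAddMonoidHom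
  have hψ : ∀ x, ψ x = χ (Algebra.trace (ZMod 2) F x) := fun x => rfl
  refine ⟨ψ, fun x => ?_, fun x => ?_, fun a ha => ?_⟩
  · rw [hψ]; exact hχ2 _
  · rw [hψ, hψ]
    congr 1
    have h := Algebra.trace_eq_of_algEquiv
      (FiniteField.frobeniusAlgEquivOfAlgebraic (ZMod 2) F) x
    rw [← h, FiniteField.coe_frobeniusAlgEquivOfAlgebraic]
    simp [ZMod.card]
  · have htr := (traceForm_nondegenerate (ZMod 2) F).1 a
    simp_rw [Algebra.traceForm_apply] at htr
    by_contra! hf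
    apply ha
    apply htr
    intro y
    by_contra h
    exact hχ1 _ h (by rw [← hψ]; exact hf y)

/-- elementary symmetric sums -/
def es {ι : Type} (f : ι → ℤ) (U : Finset ι) (k : ℕ) : ℤ :=
  ∑ S ∈ U.powersetCard k, ∏ i ∈ S, f i

lemma es_zero {ι : Type} (f : ι → ℤ) (U : Finset ι) : es f U 0 = 1 := by
  simp [es]

lemma es_empty {ι : Type} (f : ι → ℤ) (k : ℕ) : es f ∅ (k + 1) = 0 := by
  unfold es
  rw [Finset.powersetCard_eq_empty.2 (by simp), Finset.sum_empty]

lemma es_insert {ι : Type} [DecidableEq ι] (f : ι → ℤ) (U : Finset ι) (x : ι) (hx : x ∉ U)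
    (k : ℕ) : es f (insert x U) (k + 1) = es f U (k + 1) + f x * es f U k := by
  unfold es
  rw [Finset.powersetCard_succ_insert hx, Finset.sum_union, Finset.sum_image, Finset.mul_sum]
  · congr 1
    refine Finset.sum_congr rfl fun S hS => ?_
    rw [Finset.mem_powersetCard] at hS
    rw [Finset.prod_insert (fun h => hx (hS.1 h))]
  · intro S hS T hT h
    simp only [Finset.mem_coe, Finset.mem_powersetCard] at hS hT
    have hS' : x ∉ S := fun h => hx (hS.1 h)
    have hT' : x ∉ T := fun h => hx (hT.1 h)
    rw [← Finset.erase_insert hS', ← Finset.erase_insert hT', h]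
  · rw [Finset.disjoint_left]
    intro S hS hS'
    rw [Finset.mem_image] at hS'
    obtain ⟨T, hT, rfl⟩ := hS'
    rw [Finset.mem_powersetCard] at hS
    exact hx (hS.1 (Finset.mem_insert_self _ _))

lemma es_one {ι : Type} (f : ι → ℤ) (U : Finset ι) : es f U 1 = ∑ i ∈ U, f i := by
  simp [es, Finset.powersetCard_one]

lemma es_rec {ι : Type} [DecidableEq ι] (f : ι → ℤ) (hf : ∀ i, f i * f i = 1) (U : Finset ι) :
    ∀ k : ℕ, (∑ i ∈ U, f i) * es f U (k + 1) =
      (k + 2) * es f U (k + 2) + ((U.card : ℤ) - k) * es f U k := by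
  induction U using Finset.induction_on with
  | empty =>
    intro k
    cases k with
    | zero => simp [es_empty]
    | succ k => simp [es_empty]
  | insert x U hx ih =>
    intro k
    rw [Finset.sum_insert hx, Finset.card_insert_of_notMem hx]
    cases k with
    | zero =>
      have h1 := ih 0
      simp only [es_insert _ _ _ hx, zero_add, es_zero, es_one] at *
      push_cast at *
      linear_combination h1 + hf x
    | succ k =>
      have h1 := ih (k + 1)
      have h2 := ih k
      simp only [es_insert _ _ _ hx] at *
      push_cast at *
      have e : k + 1 + 1 = k + 2 := rfl
      have e' : k + 1 + 2 = k + 3 := rfl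
      have e'' : k + 2 + 1 = k + 3 := rfl
      simp only [e, e'] at *
      linear_combination h1 + f x * h2 + es f U (k+1) * hf x

lemma pow_gcd {F : Type} [Field F] [Fintype F] {m : ℕ} (hF : Fintype.card F = 2 ^ m)
    (a : ℕ) (w : F) : w ^ (2 ^ a) = w ↔ w ^ (2 ^ (Nat.gcd m a)) = w := by
  have key : ∀ k, w ^ (2 ^ k) = w ↔ Function.IsPeriodicPt (fun x : F => x ^ 2) k w := by
    intro k
    rw [Function.IsPeriodicPt, Function.IsFixedPt, pow_iterate]
  rw [key, key]
  constructor
  · intro h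
    refine Function.IsPeriodicPt.gcd ?_ h
    rw [← key, ← hF, FiniteField.pow_card]
  · intro h
    exact h.trans_dvd (Nat.gcd_dvd_right _ _)

lemma fix_card {F : Type} [Field F] [Fintype F] [DecidableEq F] {m : ℕ} (hm : 0 < m)
    (α : F) (hα : orderOf α = 2 ^ m - 1)
    (d : ℕ) (hd : d ∣ m) (hd0 : 0 < d) :
    (univ.filter fun w : F => w ^ (2 ^ d) = w).card = 2 ^ d := by
  have h1 : 2 ^ d - 1 ∣ 2 ^ m - 1 := by
    obtain ⟨t, rfl⟩ := hd
    rw [pow_mul]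
    simpa using Nat.sub_dvd_pow_sub_pow (2 ^ d) 1 t
  have hdp : 2 ≤ 2 ^ d := by
    calc 2 = 2 ^ 1 := rfl
      _ ≤ 2 ^ d := Nat.pow_le_pow_right (by norm_num) hd0
  have hmp : 2 ≤ 2 ^ m := by
    calc 2 = 2 ^ 1 := rfl
      _ ≤ 2 ^ m := Nat.pow_le_pow_right (by norm_num) hm
  obtain ⟨t, ht⟩ := h1
  have hprim : IsPrimitiveRoot (α ^ t) (2 ^ d - 1) := by
    have := (IsPrimitiveRoot.orderOf α)
    rw [hα] at this
    exact this.pow (by omega) (by rw [ht, mul_comm])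
  have hc := hprim.card_nthRootsFinset
  have : (univ.filter fun w : F => w ^ (2 ^ d) = w) = insert 0 (nthRootsFinset (2 ^ d - 1) (1:F)) := by
    ext w
    simp only [Finset.mem_filter, Finset.mem_univ, true_and, Finset.mem_insert]
    rw [mem_nthRootsFinset (by omega)]
    obtain ⟨r, hr⟩ : ∃ r, 2 ^ d = r + 1 := ⟨2 ^ d - 1, by omega⟩
    rw [hr, Nat.add_sub_cancel]
    by_cases hw : w = 0
    · simp [hw]
    · simp only [hw, false_or]
      rw [pow_succ]
      constructor
      · intro h; exact mul_right_cancel₀ hw (by rw [h, one_mul])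
      · intro h; rw [h, one_mul]
  rw [this, Finset.card_insert_of_notMem, hc]
  · omega
  · rw [mem_nthRootsFinset (by omega), zero_pow (by omega)]
    exact zero_ne_one

lemma es_eight {ι : Type} [DecidableEq ι] (f : ι → ℤ) (hf : ∀ i, f i * f i = 1) (U : Finset ι)
    (s n : ℤ) (hs : ∑ i ∈ U, f i = s) (hn : (U.card : ℤ) = n) :
    40320 * es f U 8 = (s ^ 2) ^ 4 + (112 - 28 * n) * (s ^ 2) ^ 3
      + (2464 - 1540 * n + 210 * n ^ 2) * (s ^ 2) ^ 2
      + (8448 - 11872 * n + 4200 * n ^ 2 - 420 * n ^ 3) * s ^ 2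
      + (-5040 * n + 4620 * n ^ 2 - 1260 * n ^ 3 + 105 * n ^ 4) := by
  have h := es_rec f hf U
  rw [hs, hn] at h
  have e0 := es_zero f U
  have e1 := es_one f U
  rw [hs] at e1
  have h0 := h 0
  have h1 := h 1
  have h2 := h 2
  have h3 := h 3
  have h4 := h 4
  have h5 := h 5
  have h6 := h 6
  clear h
  norm_num only at h0 h1 h2 h3 h4 h5 h6
  rw [e0, e1] at h0
  rw [e1] at h1
  have a2 : 2 * es f U 2 = s ^ 2 - n := by linear_combination -h0
  have a3 : 6 * es f U 3 = s * (s ^ 2 - n) - 2 * (n - 1) * s := by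
    linear_combination -2 * h1 + s * a2
  have a4 : 24 * es f U 4 = s * (s * (s ^ 2 - n) - 2 * (n - 1) * s)
      - 3 * (n - 2) * (s ^ 2 - n) := by
    linear_combination -6 * h2 + s * a3 - 3 * (n - 2) * a2
  have a5 : 120 * es f U 5 = s * (24 * es f U 4) - 4 * (n - 3) * (6 * es f U 3) := by
    linear_combination -24 * h3
  have a6 : 720 * es f U 6 = s * (120 * es f U 5) - 5 * (n - 4) * (24 * es f U 4) := by
    linear_combination -120 * h4
  have a7 : 5040 * es f U 7 = s * (720 * es f U 6) - 6 * (n - 5) * (120 * es f U 5) := by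
    linear_combination -720 * h5
  have a8 : 40320 * es f U 8 = s * (5040 * es f U 7) - 7 * (n - 6) * (720 * es f U 6) := by
    linear_combination -5040 * h6
  rw [a8, a7, a6, a5, a4, a3]
  ring

/-- exponential sum -/
def sE {F : Type} [Field F] [Fintype F] (ψ : AddChar F ℤ) (Q : ℕ) (a b : F) : ℤ :=
  ∑ x : F, ψ (a * x + b * (x * x ^ Q))

/-- radical -/
def KK {F : Type} [Field F] [Fintype F] [DecidableEq F] (Q : ℕ) (b : F) : Finset F :=
  univ.filter fun z => b * z + b ^ Q * (z ^ Q) ^ Q = 0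

section
variable {F : Type} [Field F] [Fintype F] [DecidableEq F] (ψ : AddChar F ℤ) (Q : ℕ)

lemma sum_char (hnd : ∀ a : F, a ≠ 0 → ∃ b, ψ (a * b) ≠ 1) (c : F) :
    ∑ x : F, ψ (c * x) = if c = 0 then (Fintype.card F : ℤ) else 0 := by
  split_ifs with h
  · simp [h]
  · obtain ⟨b, hb⟩ := hnd c h
    have h1 : ψ (c * b) * ∑ x : F, ψ (c * x) = ∑ x : F, ψ (c * x) := by
      rw [Finset.mul_sum]
      rw [← Equiv.sum_comp (Equiv.addLeft b) (fun x => ψ (c * x))]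
      refine Finset.sum_congr rfl fun x _ => ?_
      rw [← AddChar.map_add_eq_mul, Equiv.coe_addLeft, mul_add]
    have h2 : (ψ (c * b) - 1) * ∑ x : F, ψ (c * x) = 0 := by linear_combination h1
    rcases mul_eq_zero.1 h2 with h3 | h3
    · exact absurd (by linear_combination h3) hb
    · exact h3

lemma cross (h2 : (2 : F) = 0) (hQ : ∀ x y : F, (x + y) ^ Q = x ^ Q + y ^ Q)
    (hψQ : ∀ x : F, ψ (x ^ Q) = ψ x) (a b x z : F) :
    ψ (a * (x + z) + b * ((x + z) * (x + z) ^ Q)) =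
      ψ (a * x + b * (x * x ^ Q)) * ψ (a * z + b * (z * z ^ Q)) *
        ψ ((b * z + b ^ Q * (z ^ Q) ^ Q) * x ^ Q) := by
  have : ψ ((b * z + b ^ Q * (z ^ Q) ^ Q) * x ^ Q) = ψ (b * z * x ^ Q) * ψ (b * z ^ Q * x) := by
    rw [← hψQ (b * z ^ Q * x), ← AddChar.map_add_eq_mul]
    congr 1
    rw [mul_pow, mul_pow]; ring
  rw [this, ← AddChar.map_add_eq_mul, ← AddChar.map_add_eq_mul, ← AddChar.map_add_eq_mul, hQ]
  congr 1
  ring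

lemma sE_sq (hψ1 : ∀ x, ψ x * ψ x = 1) (hnd : ∀ a : F, a ≠ 0 → ∃ b, ψ (a * b) ≠ 1)
    (h2 : (2 : F) = 0) (hQ : ∀ x y : F, (x + y) ^ Q = x ^ Q + y ^ Q)
    (hψQ : ∀ x : F, ψ (x ^ Q) = ψ x) (hbij : Function.Bijective fun x : F => x ^ Q) (a b : F) :
    sE ψ Q a b ^ 2 = (Fintype.card F : ℤ) * ∑ z ∈ KK Q b, ψ (a * z + b * (z * z ^ Q)) := by
  have h : sE ψ Q a b ^ 2 = ∑ z : F, ∑ x : F, ψ (a * z + b * (z * z ^ Q)) *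
      ψ ((b * z + b ^ Q * (z ^ Q) ^ Q) * x ^ Q) := by
    rw [Finset.sum_comm, pow_two]
    conv_lhs => rw [sE, Finset.sum_mul]
    refine Finset.sum_congr rfl fun x _ => ?_
    rw [Finset.mul_sum, ← Equiv.sum_comp (Equiv.addLeft x)]
    refine Finset.sum_congr rfl fun z _ => ?_
    rw [Equiv.coe_addLeft, cross ψ Q h2 hQ hψQ]
    linear_combination (ψ (a * z + b * (z * z ^ Q)) *
      ψ ((b * z + b ^ Q * (z ^ Q) ^ Q) * x ^ Q)) * hψ1 (a * x + b * (x * x ^ Q))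
  rw [h, KK, Finset.sum_filter, Finset.mul_sum]
  refine Finset.sum_congr rfl fun z _ => ?_
  rw [← Finset.mul_sum]
  have := (Equiv.sum_comp (Equiv.ofBijective _ hbij)
    (fun x => ψ ((b * z + b ^ Q * (z ^ Q) ^ Q) * x)))
  simp only [Equiv.ofBijective_apply] at this
  rw [this, sum_char ψ hnd]
  split_ifs <;> ring

lemma sE_four (hψ1 : ∀ x, ψ x * ψ x = 1) (hnd : ∀ a : F, a ≠ 0 → ∃ b, ψ (a * b) ≠ 1)
    (h2 : (2 : F) = 0) (hQ : ∀ x y : F, (x + y) ^ Q = x ^ Q + y ^ Q)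
    (hψQ : ∀ x : F, ψ (x ^ Q) = ψ x) (hbij : Function.Bijective fun x : F => x ^ Q) (a b : F) :
    (sE ψ Q a b ^ 2) ^ 2 = (((KK Q b).card : ℤ) * (Fintype.card F : ℤ)) * sE ψ Q a b ^ 2 := by
  rw [sE_sq ψ Q hψ1 hnd h2 hQ hψQ hbij]
  set T := ∑ z ∈ KK Q b, ψ (a * z + b * (z * z ^ Q)) with hT
  have hadd : ∀ z ∈ KK Q b, ∀ w ∈ KK Q b, z + w ∈ KK Q b := by
    intro z hz w hw
    simp only [KK, Finset.mem_filter, Finset.mem_univ, true_and] at *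
    rw [hQ, hQ]; linear_combination hz + hw
  have hTT : T * T = (KK Q b).card * T := by
    conv_lhs => lhs; rw [hT]
    rw [Finset.sum_mul, ← nsmul_eq_mul, ← Finset.sum_const]
    refine Finset.sum_congr rfl fun z hz => ?_
    have hz2 : z + z = 0 := by linear_combination z * h2
    rw [hT, Finset.mul_sum]
    refine Finset.sum_bij' (fun w _ => w + z) (fun w _ => w + z) (fun w hw => hadd _ hw _ hz)
      (fun w hw => hadd _ hw _ hz) (fun w _ => by rw [add_assoc, hz2, add_zero])
      (fun w _ => by rw [add_assoc, hz2, add_zero]) (fun w hw => ?_)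
    rw [cross ψ Q h2 hQ hψQ]
    have : b * z + b ^ Q * (z ^ Q) ^ Q = 0 := by
      simpa only [KK, Finset.mem_filter, Finset.mem_univ, true_and] using hz
    rw [this, zero_mul, AddChar.map_zero_eq_one]
    ring
  linear_combination (Fintype.card F : ℤ) ^ 2 * hTT

lemma sE_sum (hψ1 : ∀ x, ψ x * ψ x = 1) (hnd : ∀ a : F, a ≠ 0 → ∃ b, ψ (a * b) ≠ 1)
    (h2 : (2 : F) = 0) (hQ0 : Q ≠ 0) (hQ : ∀ x y : F, (x + y) ^ Q = x ^ Q + y ^ Q)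
    (hψQ : ∀ x : F, ψ (x ^ Q) = ψ x) (hbij : Function.Bijective fun x : F => x ^ Q) (b : F) :
    ∑ a : F, sE ψ Q a b ^ 2 = (Fintype.card F : ℤ) ^ 2 := by
  simp_rw [sE_sq ψ Q hψ1 hnd h2 hQ hψQ hbij]
  rw [← Finset.mul_sum, Finset.sum_comm]
  have : ∀ z ∈ KK Q b, ∑ a : F, ψ (a * z + b * (z * z ^ Q)) =
      if z = 0 then (Fintype.card F : ℤ) else 0 := by
    intro z _
    simp_rw [AddChar.map_add_eq_mul]
    rw [← Finset.sum_mul]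
    simp_rw [mul_comm _ z]
    rw [sum_char ψ hnd]
    split_ifs with h
    · simp [h]
    · simp
  rw [Finset.sum_congr rfl this, Finset.sum_ite_eq', if_pos]
  · ring
  · simp [KK, hQ0]

/-- moments for fixed b -/
lemma sE_moment (hψ1 : ∀ x, ψ x * ψ x = 1) (hnd : ∀ a : F, a ≠ 0 → ∃ b, ψ (a * b) ≠ 1)
    (h2 : (2 : F) = 0) (hQ0 : Q ≠ 0) (hQ : ∀ x y : F, (x + y) ^ Q = x ^ Q + y ^ Q)
    (hψQ : ∀ x : F, ψ (x ^ Q) = ψ x) (hbij : Function.Bijective fun x : F => x ^ Q) (b : F)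
    (k : ℕ) :
    ∑ a : F, (sE ψ Q a b ^ 2) ^ (k + 1) =
      (((KK Q b).card : ℤ) * (Fintype.card F : ℤ)) ^ k * (Fintype.card F : ℤ) ^ 2 := by
  induction k with
  | zero => simpa using sE_sum ψ Q hψ1 hnd h2 hQ0 hQ hψQ hbij b
  | succ k ih =>
    rw [pow_succ _ k, mul_right_comm, ← ih, Finset.sum_mul]
    refine Finset.sum_congr rfl fun a _ => ?_
    have := sE_four ψ Q hψ1 hnd h2 hQ hψQ hbij a b
    rw [pow_succ, pow_succ, mul_assoc, ← pow_two, this]; ring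

end

section
variable {F : Type} [Field F] [Fintype F] [DecidableEq F] (Q : ℕ)

lemma KK_zero (hQ0 : Q ≠ 0) : KK Q (0 : F) = univ := by
  ext z; simp [KK, hQ0]

lemma KK_card (h2 : (2 : F) = 0) (hQ0 : Q ≠ 0)
    (h16 : (univ.filter fun w : F => (w ^ Q) ^ Q = w).card = 16) (b : F) (hb : b ≠ 0) :
    (KK Q b).card = 1 ∨ (KK Q b).card = 16 := by
  by_cases h : ∃ z ∈ KK Q b, z ≠ 0
  · right
    obtain ⟨z, hz, hz0⟩ := h
    rw [← h16]
    simp only [KK, Finset.mem_filter, Finset.mem_univ, true_and] at hz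
    refine Finset.card_bij' (fun w _ => w / z) (fun w _ => w * z) ?_ ?_ ?_ ?_
    · intro w hw
      simp only [KK, Finset.mem_filter, Finset.mem_univ, true_and] at *
      rw [div_pow, div_pow, div_eq_div_iff (pow_ne_zero _ (pow_ne_zero _ hz0)) hz0]
      apply mul_left_cancel₀ (pow_ne_zero Q hb)
      linear_combination z * hw - w * hz
    · intro w hw
      simp only [KK, Finset.mem_filter, Finset.mem_univ, true_and] at *
      rw [mul_pow, mul_pow, hw]
      linear_combination w * hz
    · intro w _; field_simp
    · intro w _; field_simp
  · left
    push Not at h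
    rw [Finset.card_eq_one]
    refine ⟨0, ?_⟩
    ext z
    rw [Finset.mem_singleton]
    constructor
    · exact h z
    · rintro rfl; simp [KK, hQ0]

lemma KK_sum (h2 : (2 : F) = 0) (hQ0 : Q ≠ 0)
    (h4 : (univ.filter fun w : F => w ^ Q = w).card = 4) :
    ∑ b : F, (KK Q b).card = Fintype.card F + 4 * (Fintype.card F - 1) := by
  simp_rw [KK, Finset.card_filter]
  rw [Finset.sum_comm]
  simp_rw [← Finset.card_filter]
  have h1 : ∀ z ∈ (univ : Finset F).erase 0,
      (univ.filter fun b : F => b * z + b ^ Q * (z ^ Q) ^ Q = 0).card = 4 := by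
    intro z hz
    have hz0 := Finset.ne_of_mem_erase hz
    have hz1 := pow_ne_zero Q hz0
    rw [← h4]
    refine Finset.card_bij' (fun b _ => b * (z * z ^ Q)) (fun b _ => b / (z * z ^ Q)) ?_ ?_ ?_ ?_
    · intro b hb
      simp only [Finset.mem_filter, Finset.mem_univ, true_and] at *
      rw [mul_pow, mul_pow]
      linear_combination z ^ Q * hb - b * z * z ^ Q * h2
    · intro b hb
      simp only [Finset.mem_filter, Finset.mem_univ, true_and] at *
      rw [div_pow, hb, mul_pow]
      field_simp
      linear_combination b * h2
    · intro w _; field_simp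
    · intro w _; field_simp
  rw [← Finset.add_sum_erase _ _ (Finset.mem_univ (0 : F)), Finset.sum_congr rfl h1]
  simp [hQ0, mul_comm]

lemma KK_pow_sum (h2 : (2 : F) = 0) (hQ0 : Q ≠ 0)
    (h4 : (univ.filter fun w : F => w ^ Q = w).card = 4)
    (h16 : (univ.filter fun w : F => (w ^ Q) ^ Q = w).card = 16) (n : ℤ)
    (hn : (Fintype.card F : ℤ) = n) (k : ℕ) :
    5 * ∑ b : F, ((KK Q b).card : ℤ) ^ k = 5 * n ^ k + (n - 1) * (16 ^ k + 4) := by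
  have hs := KK_sum Q h2 hQ0 h4
  have hpos : 1 ≤ Fintype.card F := Fintype.card_pos
  zify [hpos] at hs
  rw [← Finset.add_sum_erase _ _ (Finset.mem_univ (0 : F)), KK_zero Q hQ0, Finset.card_univ, hn] at hs
  rw [← Finset.add_sum_erase _ _ (Finset.mem_univ (0 : F)), KK_zero Q hQ0, Finset.card_univ, hn]
  have h1 : ∀ b ∈ (univ : Finset F).erase 0, 15 * ((KK Q b).card : ℤ) ^ k =
      15 + (16 ^ k - 1) * (((KK Q b).card : ℤ) - 1) := by
    intro b hb
    rcases KK_card Q h2 hQ0 h16 b (Finset.ne_of_mem_erase hb) with h | h <;> rw [h]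
    · simp
    · push_cast; ring
  have h3 := Finset.sum_congr (rfl : (univ : Finset F).erase 0 = _) h1
  rw [← Finset.mul_sum, Finset.sum_add_distrib, ← Finset.mul_sum, Finset.sum_sub_distrib,
    Finset.sum_const, Finset.sum_const, Finset.card_erase_of_mem (Finset.mem_univ _),
    Finset.card_univ, nsmul_eq_mul, nsmul_eq_mul, Nat.cast_sub hpos, hn] at h3
  push_cast at h3
  have h5 : (15 : ℤ) ≠ 0 := by norm_num
  apply mul_left_cancel₀ h5
  linear_combination 5 * h3 + 5 * (16 ^ k - 1) * hs
end

/-- the supports of weight-eight words -/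
def goodSets (F : Type) [Field F] [Fintype F] [DecidableEq F] (Q : ℕ) : Finset (Finset F) :=
  (Finset.powersetCard 8 univ).filter fun S => ∑ x ∈ S, x = 0 ∧ ∑ x ∈ S, x * x ^ Q = 0

section
variable {F : Type} [Field F] [Fintype F] [DecidableEq F] (ψ : AddChar F ℤ) (Q : ℕ)

lemma addChar_sum (g : F → F) (S : Finset F) : ψ (∑ x ∈ S, g x) = ∏ x ∈ S, ψ (g x) := by
  classical
  induction S using Finset.induction_on with
  | empty => simp
  | insert x S hx ih => rw [Finset.sum_insert hx, Finset.prod_insert hx, AddChar.map_add_eq_mul, ih]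

lemma good_count (hnd : ∀ a : F, a ≠ 0 → ∃ b, ψ (a * b) ≠ 1) :
    (Fintype.card F : ℤ) ^ 2 * (goodSets F Q).card =
      ∑ b : F, ∑ a : F, es (fun x => ψ (a * x + b * (x * x ^ Q))) univ 8 := by
  have h1 : ∀ (a b : F) (S : Finset F), ∏ x ∈ S, ψ (a * x + b * (x * x ^ Q)) =
      ψ ((∑ x ∈ S, x) * a) * ψ ((∑ x ∈ S, x * x ^ Q) * b) := by
    intro a b S
    rw [← AddChar.map_add_eq_mul, ← addChar_sum]
    congr 1
    rw [Finset.sum_add_distrib, ← Finset.mul_sum, ← Finset.mul_sum]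
    ring
  have h2 : ∀ b : F, ∑ a : F, es (fun x => ψ (a * x + b * (x * x ^ Q))) univ 8 =
      ∑ S ∈ Finset.powersetCard 8 univ, ∑ a : F,
        ψ ((∑ x ∈ S, x) * a) * ψ ((∑ x ∈ S, x * x ^ Q) * b) := by
    intro b
    unfold es
    rw [Finset.sum_comm]
    simp_rw [h1]
  simp_rw [h2]
  rw [Finset.sum_comm]
  simp_rw [← Finset.sum_mul, ← Finset.mul_sum, sum_char ψ hnd]
  rw [goodSets, Finset.card_filter, Nat.cast_sum, Finset.mul_sum]
  refine Finset.sum_congr rfl fun S _ => ?_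
  by_cases ha : ∑ x ∈ S, x = 0 <;> by_cases hb : ∑ x ∈ S, x * x ^ Q = 0 <;> simp [ha, hb, pow_two]

lemma good_value (hψ1 : ∀ x, ψ x * ψ x = 1) (hnd : ∀ a : F, a ≠ 0 → ∃ b, ψ (a * b) ≠ 1)
    (h2 : (2 : F) = 0) (hQ0 : Q ≠ 0) (hQ : ∀ x y : F, (x + y) ^ Q = x ^ Q + y ^ Q)
    (hψQ : ∀ x : F, ψ (x ^ Q) = ψ x) (hbij : Function.Bijective fun x : F => x ^ Q)
    (h4 : (univ.filter fun w : F => w ^ Q = w).card = 4)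
    (h16 : (univ.filter fun w : F => (w ^ Q) ^ Q = w).card = 16) (n : ℤ)
    (hn : (Fintype.card F : ℤ) = n) :
    5 * 40320 * (n ^ 2 * (goodSets F Q).card) =
      n ^ 5 * (5 * n ^ 3 + (n - 1) * (16 ^ 3 + 4))
      + (112 - 28 * n) * (n ^ 4 * (5 * n ^ 2 + (n - 1) * (16 ^ 2 + 4)))
      + (2464 - 1540 * n + 210 * n ^ 2) * (n ^ 3 * (5 * n ^ 1 + (n - 1) * (16 ^ 1 + 4)))
      + (8448 - 11872 * n + 4200 * n ^ 2 - 420 * n ^ 3) * (n ^ 2 * (5 * n))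
      + (-5040 * n + 4620 * n ^ 2 - 1260 * n ^ 3 + 105 * n ^ 4) * (5 * n ^ 2) := by
  have hM : ∀ k : ℕ, 5 * ∑ b : F, ∑ a : F, (sE ψ Q a b ^ 2) ^ (k + 1) =
      n ^ (k + 2) * (5 * n ^ k + (n - 1) * (16 ^ k + 4)) := by
    intro k
    simp_rw [sE_moment ψ Q hψ1 hnd h2 hQ0 hQ hψQ hbij, mul_pow]
    rw [← Finset.sum_mul, ← Finset.sum_mul, hn, ← KK_pow_sum Q h2 hQ0 h4 h16 n hn k]
    ring
  have hE := fun a b : F => es_eight (fun x => ψ (a * x + b * (x * x ^ Q))) (fun i => hψ1 _) univ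
    (sE ψ Q a b) n rfl (by rw [Finset.card_univ, hn])
  obtain ⟨D, hD⟩ : ∃ D : ℤ, D = -5040 * n + 4620 * n ^ 2 - 1260 * n ^ 3 + 105 * n ^ 4 := ⟨_, rfl⟩
  rw [← hD] at hE ⊢
  rw [← hn, good_count ψ Q hnd, hn, mul_assoc, Finset.mul_sum]
  simp_rw [Finset.mul_sum (s := univ) (a := (40320 : ℤ)), hE, Finset.sum_add_distrib, ← Finset.mul_sum]
  have m0 := hM 0
  have m1 := hM 1
  have m2 := hM 2
  have m3 := hM 3
  simp only [zero_add, pow_one] at m0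
  norm_num only at m0 m1 m2 m3
  rw [Finset.sum_const, Finset.sum_const, Finset.card_univ, nsmul_eq_mul, nsmul_eq_mul, hn]
  linear_combination m3 + (112 - 28 * n) * m2 + (2464 - 1540 * n + 210 * n ^ 2) * m1 +
    (8448 - 11872 * n + 4200 * n ^ 2 - 420 * n ^ 3) * m0

end

section
variable {F : Type} [Field F] [Fintype F] [DecidableEq F] (Q : ℕ)

/-- good sets through two points -/
def goodTwo (u v : F) : Finset (Finset F) := (goodSets F Q).filter fun S => u ∈ S ∧ v ∈ S

lemma affine_sum (hQ : ∀ x y : F, (x + y) ^ Q = x ^ Q + y ^ Q) (h2 : (2 : F) = 0)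
    (a b : F) (ha : a ≠ 0) (S : Finset F) (hS : S.card = 8)
    (h0 : ∑ x ∈ S, x = 0) (h1 : ∑ x ∈ S, x * x ^ Q = 0) :
    ∑ x ∈ S.image (fun x => a * x + b), x = 0 ∧
      ∑ x ∈ S.image (fun x => a * x + b), x * x ^ Q = 0 := by
  have hinj : ∀ x ∈ S, ∀ y ∈ S, a * x + b = a * y + b → x = y := by
    intro x _ y _ h
    exact mul_left_cancel₀ ha (add_right_cancel h)
  have hQs : ∑ x ∈ S, x ^ Q = (∑ x ∈ S, x) ^ Q ∨ Q = 0 := by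
    by_cases hq : Q = 0
    · right; exact hq
    left
    let φ : F →+ F := { toFun := fun x => x ^ Q, map_zero' := zero_pow hq, map_add' := hQ }
    exact (map_sum φ (fun x => x) S).symm
  have h8 : (8 : F) = 0 := by linear_combination 4 * h2
  rw [Finset.sum_image hinj, Finset.sum_image hinj]
  have hQ0 : ∑ x ∈ S, x ^ Q = 0 := by
    rcases hQs with h | h
    · rw [h, h0]
      by_cases hq : Q = 0
      · exfalso
        have := hQ 0 0
        rw [hq] at this
        simp at this
      · exact zero_pow hq
    · rw [h]; simp [hS, h8]
  constructor
  · rw [Finset.sum_add_distrib, ← Finset.mul_sum, h0, Finset.sum_const, hS, nsmul_eq_mul]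
    push_cast
    rw [h8]; ring
  · have : ∀ x ∈ S, (a * x + b) * (a * x + b) ^ Q =
        a * a ^ Q * (x * x ^ Q) + b * a ^ Q * x ^ Q + a * b ^ Q * x + b * b ^ Q := by
      intro x _
      rw [hQ, mul_pow]; ring
    rw [Finset.sum_congr rfl this]
    rw [Finset.sum_add_distrib, Finset.sum_add_distrib, Finset.sum_add_distrib, ← Finset.mul_sum,
      ← Finset.mul_sum, ← Finset.mul_sum, h0, h1, hQ0, Finset.sum_const, hS, nsmul_eq_mul]
    push_cast
    rw [h8]; ring

lemma good_image (hQ : ∀ x y : F, (x + y) ^ Q = x ^ Q + y ^ Q) (h2 : (2 : F) = 0)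
    (a b : F) (ha : a ≠ 0) (S : Finset F) (hS : S ∈ goodSets F Q) :
    S.image (fun x => a * x + b) ∈ goodSets F Q := by
  simp only [goodSets, Finset.mem_filter, Finset.mem_powersetCard, Finset.subset_univ,
    true_and] at *
  refine ⟨?_, affine_sum Q hQ h2 a b ha S hS.1 hS.2.1 hS.2.2⟩
  rw [Finset.card_image_of_injective, hS.1]
  intro x y h
  exact mul_left_cancel₀ ha (add_right_cancel h)

lemma goodTwo_card (hQ : ∀ x y : F, (x + y) ^ Q = x ^ Q + y ^ Q) (h2 : (2 : F) = 0)
    (u v : F) (huv : u ≠ v) :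
    (goodTwo Q u v).card = (goodTwo Q (0 : F) 1).card := by
  have hd : v - u ≠ 0 := sub_ne_zero.2 huv.symm
  refine Finset.card_bij' (fun S _ => S.image (fun x => (v - u)⁻¹ * x + -((v - u)⁻¹ * u)))
    (fun S _ => S.image (fun x => (v - u) * x + u)) ?_ ?_ ?_ ?_
  · intro S hS
    rw [goodTwo, Finset.mem_filter] at *
    refine ⟨good_image Q hQ h2 _ _ (inv_ne_zero hd) S hS.1, ?_, ?_⟩
    · exact Finset.mem_image.2 ⟨u, hS.2.1, by ring⟩
    · exact Finset.mem_image.2 ⟨v, hS.2.2, by field_simp; ring⟩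
  · intro S hS
    rw [goodTwo, Finset.mem_filter] at *
    refine ⟨good_image Q hQ h2 _ _ hd S hS.1, ?_, ?_⟩
    · exact Finset.mem_image.2 ⟨0, hS.2.1, by ring⟩
    · exact Finset.mem_image.2 ⟨1, hS.2.2, by ring⟩
  · intro S _
    rw [Finset.image_image]
    refine Eq.trans (Finset.image_congr fun x _ => ?_) Finset.image_id
    simp only [Function.comp, id]
    field_simp
    ring
  · intro S _
    rw [Finset.image_image]
    refine Eq.trans (Finset.image_congr fun x _ => ?_) Finset.image_id
    simp only [Function.comp, id]
    field_simp
    ring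

lemma good_double (hQ : ∀ x y : F, (x + y) ^ Q = x ^ Q + y ^ Q) (h2 : (2 : F) = 0)
    (u v : F) (huv : u ≠ v) :
    (Fintype.card F * Fintype.card F - Fintype.card F) * (goodTwo Q u v).card =
      56 * (goodSets F Q).card := by
  rw [goodTwo_card Q hQ h2 u v huv]
  have h : ∑ p ∈ (univ : Finset F).offDiag, (goodTwo Q p.1 p.2).card =
      ∑ S ∈ goodSets F Q, S.offDiag.card := by
    simp_rw [goodTwo, Finset.card_filter]
    rw [Finset.sum_comm]
    refine Finset.sum_congr rfl fun S _ => ?_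
    rw [← Finset.card_filter]
    congr 1
    ext p
    simp only [Finset.mem_filter, Finset.mem_offDiag, Finset.mem_univ, true_and]
    tauto
  have h3 : ∀ p ∈ (univ : Finset F).offDiag, (goodTwo Q p.1 p.2).card = (goodTwo Q (0 : F) 1).card := by
    intro p hp
    exact goodTwo_card Q hQ h2 _ _ (Finset.mem_offDiag.1 hp).2.2
  have h4 : ∀ S ∈ goodSets F Q, S.offDiag.card = 56 := by
    intro S hS
    rw [Finset.offDiag_card, (Finset.mem_powersetCard.1 (Finset.mem_filter.1 hS).1).2]
  rw [Finset.sum_congr rfl h3, Finset.sum_congr rfl h4, Finset.sum_const, Finset.sum_const,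
    Finset.offDiag_card, Finset.card_univ, smul_eq_mul, smul_eq_mul] at h
  rw [h, mul_comm]

end

lemma final_field {F : Type} [Field F] [Fintype F] [DecidableEq F] [Algebra (ZMod 2) F]
    (m e : ℕ) (hm4 : m % 4 = 0) (hm : 4 ≤ m) (hgcd : Nat.gcd m e = 2)
    (hF : Fintype.card F = 2 ^ m)
    (α : F) (hα : orderOf α = 2 ^ m - 1) (u v : F) (huv : u ≠ v) :
    (45 : ℤ) * (goodTwo (2 ^ e) u v).card =
      2 ^ (4 * m - 4) - 27 * 2 ^ (3 * m - 4) + 23 * 2 ^ (2 * m - 1)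
        + 261 * 2 ^ (m - 2) + 403 := by
  have hch : CharP F 2 := charP_of_injective_algebraMap' (ZMod 2) 2
  have h2 : (2 : F) = 0 := by exact_mod_cast CharP.cast_eq_zero F 2
  have hQ : ∀ x y : F, (x + y) ^ (2 ^ e) = x ^ (2 ^ e) + y ^ (2 ^ e) := fun x y =>
    add_pow_char_pow x y 2 e
  have hQ0 : 2 ^ e ≠ 0 := by positivity
  obtain ⟨ψ, hψ1, hψ2, hnd⟩ := exists_char F
  have hψQ : ∀ x : F, ψ (x ^ (2 ^ e)) = ψ x := by
    clear hgcd hQ hQ0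
    induction e with
    | zero => intro x; simp
    | succ e ih => intro x; rw [pow_succ, pow_mul, hψ2, ih]
  have hbij : Function.Bijective fun x : F => x ^ (2 ^ e) := by
    rw [← Finite.injective_iff_bijective]
    intro x y h
    have h' : x ^ (2 ^ e) = y ^ (2 ^ e) := h
    have h3 : (x - y) ^ (2 ^ e) = 0 := by rw [sub_pow_char_pow, h', sub_self]
    exact sub_eq_zero.1 (pow_eq_zero_iff hQ0 |>.1 h3)
  have hm0 : 0 < m := by omega
  have hgcd4 : Nat.gcd m (2 * e) = 4 := by
    have hd : (2 : ℕ) ∣ e := hgcd ▸ Nat.gcd_dvd_right m e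
    apply Nat.dvd_antisymm
    · have h1 : Nat.gcd m (2 * e) ∣ 2 * Nat.gcd m e := by
        rw [← Nat.gcd_mul_left]
        exact Nat.dvd_gcd ((Nat.gcd_dvd_left _ _).trans (Dvd.intro_left 2 rfl)) (Nat.gcd_dvd_right _ _)
      rwa [hgcd] at h1
    · exact Nat.dvd_gcd (Nat.dvd_of_mod_eq_zero hm4) (by omega)
  have h4 : (univ.filter fun w : F => w ^ (2 ^ e) = w).card = 4 := by
    simp_rw [pow_gcd hF e, hgcd]
    exact fix_card hm0 α hα 2 (by omega) (by norm_num)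
  have h16 : (univ.filter fun w : F => (w ^ (2 ^ e)) ^ (2 ^ e) = w).card = 16 := by
    simp_rw [← pow_mul, ← pow_add, ← two_mul, pow_gcd hF (2 * e), hgcd4]
    exact fix_card hm0 α hα 4 (by omega) (by norm_num)
  have hV := good_value ψ (2 ^ e) hψ1 hnd h2 hQ0 hQ hψQ hbij h4 h16 (2 ^ m) (by rw [hF]; norm_cast)
  have hD := good_double (2 ^ e) hQ h2 u v huv
  rw [hF] at hD
  have hle : 2 ^ m ≤ 2 ^ m * 2 ^ m := Nat.le_mul_of_pos_left _ (by positivity)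
  zify [hle] at hD
  obtain ⟨j, rfl⟩ : ∃ j, m = j + 4 := ⟨m - 4, by omega⟩
  have e1 : 4 * (j + 4) - 4 = j * 4 + 12 := by omega
  have e2 : 3 * (j + 4) - 4 = j * 3 + 8 := by omega
  have e3 : 2 * (j + 4) - 1 = j * 2 + 7 := by omega
  have e4 : j + 4 - 2 = j + 2 := by omega
  rw [e1, e2, e3, e4]
  simp only [pow_add, pow_mul] at hV hD ⊢
  generalize ((goodTwo (2 ^ e) u v).card : ℤ) = N at *
  generalize ((goodSets F (2 ^ e)).card : ℤ) = A at *
  have hw : (1 : ℤ) ≤ 2 ^ j := one_le_pow₀ (by norm_num)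
  generalize (2 : ℤ) ^ j = w at *
  have hne : (16 * w) ^ 3 * (16 * w - 1) * 4480 ≠ 0 := by
    have : 16 * w - 1 ≠ 0 := by omega
    have : w ≠ 0 := by omega
    positivity
  apply mul_left_cancel₀ hne
  linear_combination (5 * 40320 * (16 * w) ^ 2) * hD + 56 * hV

section
variable {m e : ℕ}

/-- field element attached to a coordinate -/
noncomputable def pos (m : ℕ) (α : GaloisField 2 m) (i : Fin (2 ^ m)) : GaloisField 2 m :=
  if (i : ℕ) < 2 ^ m - 1 then α ^ (i : ℕ) else 0

lemma pos_inj (hm : 0 < m) (α : GaloisField 2 m) (hα : orderOf α = 2 ^ m - 1) :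
    Function.Injective (pos m α) := by
  have hmp : 2 ≤ 2 ^ m := by
    calc 2 = 2 ^ 1 := rfl
      _ ≤ 2 ^ m := Nat.pow_le_pow_right (by norm_num) hm
  have hα0 : α ≠ 0 := by
    rintro rfl
    have := pow_orderOf_eq_one (0 : GaloisField 2 m)
    rw [hα, zero_pow (by omega)] at this
    exact zero_ne_one this
  intro i j h
  unfold pos at h
  have hi := i.2
  have hj := j.2
  apply Fin.ext
  split_ifs at h with h1 h2 h2
  · exact pow_injOn_Iio_orderOf (by simpa [hα] using h1) (by simpa [hα] using h2) h
  · exact absurd h (pow_ne_zero _ hα0)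
  · exact absurd h.symm (pow_ne_zero _ hα0)
  · omega

lemma aeval_code (hm : 0 < m) (α : GaloisField 2 m) (k : ℕ) (hk : k ≠ 0)
    (c : Fin (2 ^ m) → ZMod 2) :
    aeval (α ^ k) (codePoly fun i : Fin (2 ^ m - 1) => c (Fin.castLE (Nat.sub_le _ _) i)) =
      ∑ i ∈ univ.filter (fun i => c i ≠ 0), pos m α i ^ k := by
  have hmp : 2 ≤ 2 ^ m := by
    calc 2 = 2 ^ 1 := rfl
      _ ≤ 2 ^ m := Nat.pow_le_pow_right (by norm_num) hm
  have h01 : ∀ t : ZMod 2, t = 0 ∨ t = 1 := by decide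
  have h1 : ∑ i ∈ univ.filter (fun i => c i ≠ 0), pos m α i ^ k =
      ∑ i, algebraMap (ZMod 2) (GaloisField 2 m) (c i) * pos m α i ^ k := by
    rw [Finset.sum_filter]
    refine Finset.sum_congr rfl fun i _ => ?_
    rcases h01 (c i) with h | h <;> simp [h]
  rw [h1, codePoly, map_sum]
  obtain ⟨r, hr⟩ : ∃ r, 2 ^ m = r + 1 := ⟨2 ^ m - 1, by omega⟩
  have h2 : ∀ (N : ℕ) (hN : N = 2 ^ m - 1 + 1) (g : Fin N → GaloisField 2 m),
      (∀ i : Fin N, (i : ℕ) = 2 ^ m - 1 → g i = 0) →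
      ∑ i : Fin N, g i = ∑ i : Fin (2 ^ m - 1), g (Fin.castLE (by omega) i) := by
    intro N hN g hg
    subst hN
    rw [Fin.sum_univ_castSucc, hg (Fin.last _) rfl, add_zero]
    rfl
  rw [h2 (2 ^ m) (by omega)]
  · refine Finset.sum_congr rfl fun i _ => ?_
    have : ((Fin.castLE (Nat.sub_le (2 ^ m) 1) i : Fin (2 ^ m)) : ℕ) < 2 ^ m - 1 := i.2
    rw [pos, if_pos this]
    simp only [map_mul, aeval_C, map_pow, aeval_X, Fin.val_castLE]
    rw [← pow_mul, ← pow_mul, mul_comm k]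
  · intro i hi
    rw [pos, if_neg (by omega), zero_pow hk, mul_zero]

lemma gE_dvd (hm4 : m % 4 = 0) (hm : 4 ≤ m) (hgcd : Nat.gcd m e = 2)
    (α : GaloisField 2 m) (hα : orderOf α = 2 ^ m - 1) (p : Polynomial (ZMod 2)) :
    gE m e α ∣ p ↔ aeval (α ^ 1) p = 0 ∧ aeval (α ^ (1 + 2 ^ e)) p = 0 := by
  have hint : ∀ β : GaloisField 2 m, IsIntegral (ZMod 2) β := fun β =>
    Algebra.IsIntegral.isIntegral β
  have h16 : 16 ≤ 2 ^ m := by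
    calc 16 = 2 ^ 4 := rfl
      _ ≤ 2 ^ m := Nat.pow_le_pow_right (by norm_num) hm
  have h5 : 5 ∣ 2 ^ m - 1 := by
    obtain ⟨t, rfl⟩ := Nat.dvd_of_mod_eq_zero hm4
    rw [pow_mul]
    have := Nat.sub_dvd_pow_sub_pow (2 ^ 4) 1 t
    rw [one_pow] at this
    exact Dvd.dvd.trans (by norm_num) this
  have h5e : 5 ∣ 1 + 2 ^ e := by
    have hd : (2 : ℕ) ∣ e := hgcd ▸ Nat.gcd_dvd_right m e
    have hnd : ¬ 4 ∣ e := by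
      intro h
      have : 4 ∣ Nat.gcd m e := Nat.dvd_gcd (Nat.dvd_of_mod_eq_zero hm4) h
      rw [hgcd] at this
      omega
    obtain ⟨t, ht⟩ : ∃ t, e = 4 * t + 2 := ⟨e / 4, by omega⟩
    rw [ht, pow_add, pow_mul]
    have h1 : 2 ^ 4 ≡ 1 [MOD 5] := by decide
    have h2 := (h1.pow t).mul_right (2 ^ 2)
    have h3 : 1 + (2 ^ 4) ^ t * 2 ^ 2 ≡ 1 + 1 ^ t * 2 ^ 2 [MOD 5] := h2.add_left 1
    rw [one_pow] at h3
    exact (Nat.modEq_zero_iff_dvd).1 (h3.trans (by decide))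
  have hne : minpoly (ZMod 2) α ≠ minpoly (ZMod 2) (α ^ (1 + 2 ^ e)) := by
    intro h
    obtain ⟨t, ht⟩ := h5
    obtain ⟨r, hr⟩ := h5e
    have h1 : (α ^ (1 + 2 ^ e)) ^ t = 1 := by
      rw [hr, ← pow_mul, show 5 * r * t = (5 * t) * r by ring, ← ht, ← hα, pow_mul,
        pow_orderOf_eq_one, one_pow]
    have h2 : minpoly (ZMod 2) (α ^ (1 + 2 ^ e)) ∣ X ^ t - 1 := by
      apply minpoly.dvd
      simp [h1]
    rw [← h] at h2
    have h3 := (minpoly.dvd_iff).1 h2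
    simp only [map_sub, map_pow, aeval_X, map_one] at h3
    have h4 := orderOf_dvd_of_pow_eq_one (sub_eq_zero.1 h3)
    rw [hα, ht] at h4
    have := Nat.le_of_dvd (by omega) h4
    omega
  have hcop : IsCoprime (minpoly (ZMod 2) α) (minpoly (ZMod 2) (α ^ (1 + 2 ^ e))) := by
    rw [(minpoly.irreducible (hint α)).coprime_iff_not_dvd]
    intro h
    exact hne (Polynomial.eq_of_monic_of_associated (minpoly.monic (hint _)) (minpoly.monic (hint _))
      ((minpoly.irreducible (hint α)).associated_of_dvd (minpoly.irreducible (hint _)) h))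
  rw [gE, pow_one, ← minpoly.dvd_iff, ← minpoly.dvd_iff]
  constructor
  · intro h
    exact ⟨(dvd_mul_right _ _).trans h, (dvd_mul_left _ _).trans h⟩
  · rintro ⟨h1, h2⟩
    exact hcop.mul_dvd h1 h2

end

/-- For `m ≡ 0 (mod 4)` (with `m ≥ 4`) and `2 ≤ e ≤ ⌊m/2⌋` with
`gcd(m,e) = 2`, the supports of the weight-8 codewords of `C̄_E` form a
`2-(2^m, 8, λ)` design with
`λ = (2^{4m−4} − 27·2^{3m−4} + 23·2^{2m−1} + 261·2^{m−2} + 403)/45`. -/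
theorem design_weight_eight
    (m e : ℕ) (hm4 : m % 4 = 0) (hm : 4 ≤ m)
    (he2 : 2 ≤ e) (heM : 2 * e ≤ m) (hgcd : Nat.gcd m e = 2)
    (α : GaloisField 2 m) (hα : orderOf α = 2 ^ m - 1) :
    ∀ T : Finset (Fin (2 ^ m)), T.card = 2 →
      (45 : ℤ) * {c : Fin (2 ^ m) → ZMod 2 |
        c ∈ CEbar m e α ∧ hammingNorm c = 8 ∧ ∀ i ∈ T, c i ≠ 0}.ncard =
      2 ^ (4 * m - 4) - 27 * 2 ^ (3 * m - 4) + 23 * 2 ^ (2 * m - 1)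
        + 261 * 2 ^ (m - 2) + 403 := by
  classical
  haveI : Fintype (GaloisField 2 m) := Fintype.ofFinite _
  intro T hT
  have hm0 : 0 < m := by omega
  have hF : Fintype.card (GaloisField 2 m) = 2 ^ m := by
    rw [← Nat.card_eq_fintype_card, GaloisField.card 2 m (by omega)]
  have hinj := pos_inj hm0 α hα
  have hbij : Function.Bijective (pos m α) := by
    rw [Fintype.bijective_iff_injective_and_card]
    exact ⟨hinj, by rw [hF, Fintype.card_fin]⟩
  obtain ⟨i₀, j₀, hij, rfl⟩ := Finset.card_eq_two.1 hT
  have h01 : ∀ t : ZMod 2, t ≠ 0 → t = 1 := by decide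
  have key : ∀ c : Fin (2 ^ m) → ZMod 2,
      (c ∈ CEbar m e α ∧ hammingNorm c = 8 ∧ ∀ i ∈ ({i₀, j₀} : Finset _), c i ≠ 0) ↔
      (univ.filter fun i => c i ≠ 0).image (pos m α) ∈
        goodTwo (2 ^ e) (pos m α i₀) (pos m α j₀) := by
    intro c
    have hsum : hammingNorm c = 8 → ∑ i, c i = 0 := by
      intro h
      have h1 : ∑ i, c i = ∑ i ∈ univ.filter (fun i => c i ≠ 0), (1 : ZMod 2) := by
        rw [Finset.sum_filter]
        refine Finset.sum_congr rfl fun i _ => ?_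
        by_cases hc : c i = 0
        · simp [hc]
        · simp [h01 _ hc]
      have h2 : (univ.filter fun i => c i ≠ 0).card = 8 := h
      rw [h1, Finset.sum_const, h2]
      decide
    have hmem : ∀ i, pos m α i ∈ (univ.filter fun i => c i ≠ 0).image (pos m α) ↔ c i ≠ 0 := by
      intro i
      rw [hinj.mem_finset_image]; simp
    simp only [goodTwo, goodSets, Finset.mem_filter, Finset.mem_powersetCard, Finset.subset_univ,
      true_and, hmem, Finset.card_image_of_injective _ hinj, Finset.sum_image hinj.injOn,
      CEbar, CE, Set.mem_setOf_eq, Finset.mem_insert, Finset.mem_singleton, forall_eq_or_imp,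
      forall_eq]
    rw [gE_dvd hm4 hm hgcd α hα, aeval_code hm0 α 1 (by norm_num), aeval_code hm0 α _ (by positivity)]
    simp only [pow_one, pow_add]
    have hh : hammingNorm c = (univ.filter fun i => c i ≠ 0).card := rfl
    rw [← hh]
    constructor
    · rintro ⟨⟨h1, -⟩, h2, h3⟩
      exact ⟨⟨h2, h1⟩, h3⟩
    · rintro ⟨⟨h2, h1⟩, h3⟩
      exact ⟨⟨h1, hsum h2⟩, h2, h3⟩
  have hcard : {c : Fin (2 ^ m) → ZMod 2 |
        c ∈ CEbar m e α ∧ hammingNorm c = 8 ∧ ∀ i ∈ ({i₀, j₀} : Finset _), c i ≠ 0}.ncard =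
      (goodTwo (2 ^ e) (pos m α i₀) (pos m α j₀)).card := by
    rw [← Set.ncard_coe_finset]
    refine Set.ncard_congr (fun c _ => (univ.filter fun i => c i ≠ 0).image (pos m α)) ?_ ?_ ?_
    · intro c hc
      exact (key c).1 hc
    · intro c d _ _ h
      have h' := Finset.image_injective hinj h
      funext i
      have h1 : c i ≠ 0 ↔ d i ≠ 0 := by
        have := congrArg (fun S => i ∈ S) h'
        simpa using this
      by_cases hc : c i = 0
      · have : d i = 0 := by
          by_contra hd
          exact h1.2 hd hc
        rw [hc, this]
      · rw [h01 _ hc, h01 _ (h1.1 hc)]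
    · intro S hS
      have himg : (univ.filter fun i => (if pos m α i ∈ S then (1 : ZMod 2) else 0) ≠ 0).image
          (pos m α) = S := by
        ext x
        obtain ⟨i, rfl⟩ := hbij.2 x
        rw [hinj.mem_finset_image]
        simp
      refine ⟨fun i => if pos m α i ∈ S then 1 else 0, ?_, himg⟩
      refine (key _).2 ?_
      rw [himg]
      exact hS
  rw [hcard]
  exact final_field m e hm4 hm hgcd hF α hα _ _ (fun h => hij (hinj h))
end

section
/- Let m ≡ 0 (mod 4) and let e be an integer with 1 ≤ e ≤ m/2 and gcd(m,e) = 2. Then the number of codewords of Hamming weight 4 in the extended code C̄_E equals Ā_4 = 2^m(2^m − 1)/12. -/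
open Polynomial Finset

section helpers

lemma four_of_gcd {F : Type*} [Field F] [CharP F 2] (m e : ℕ) (hgcd : Nat.gcd m e = 2) (t : F)
    (h1 : t ^ 2 ^ m = t) (h2 : t ^ 2 ^ e = t) : t ^ 4 = t := by
  have a1 : Function.IsPeriodicPt (frobenius F 2) m t := by
    rw [Function.IsPeriodicPt, Function.IsFixedPt, iterate_frobenius, h1]
  have a2 : Function.IsPeriodicPt (frobenius F 2) e t := by
    rw [Function.IsPeriodicPt, Function.IsFixedPt, iterate_frobenius, h2]
  have a3 := a1.gcd a2
  rw [hgcd, Function.IsPeriodicPt, Function.IsFixedPt, iterate_frobenius] at a3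
  simpa using a3

lemma frob_omega {F : Type*} [Field F] (w : F) (hw : w ^ 3 = 1) (e : ℕ) (he : Even e) :
    w ^ 2 ^ e = w := by
  obtain ⟨k, rfl⟩ := he
  have : 2 ^ (k + k) % 3 = 1 := by
    rw [← two_mul, pow_mul, Nat.pow_mod]; norm_num
  rw [← Nat.div_add_mod (2 ^ (k + k)) 3, this, pow_add, pow_mul, hw]; simp

lemma form_identity {F : Type*} [Field F] [CharP F 2] (e : ℕ) (x a b : F) :
    x ^ (1 + 2 ^ e) + (x + a) ^ (1 + 2 ^ e) + (x + b) ^ (1 + 2 ^ e) + (x + a + b) ^ (1 + 2 ^ e)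
      = a * b ^ 2 ^ e + a ^ 2 ^ e * b := by
  simp only [pow_add _ 1, pow_one, add_pow_char_pow]
  have h2 : (2 : F) = 0 := CharTwo.two_eq_zero
  linear_combination (2 * x * x ^ 2 ^ e + x * a ^ 2 ^ e + x * b ^ 2 ^ e + a * x ^ 2 ^ e
    + b * x ^ 2 ^ e + a * a ^ 2 ^ e + b * b ^ 2 ^ e) * h2

def IsGood {F : Type*} [Field F] (e : ℕ) (S : Finset F) : Prop :=
  S.card = 4 ∧ ∑ x ∈ S, x = 0 ∧ ∑ x ∈ S, x ^ (1 + 2 ^ e) = 0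

lemma good_iff {F : Type*} [Field F] [CharP F 2] [DecidableEq F] (m e : ℕ)
    (hgcd : Nat.gcd m e = 2)
    (hF : ∀ t : F, t ^ 2 ^ m = t) (w : F) (hw : w ^ 2 + w + 1 = 0) (x y : F) (hxy : x ≠ y)
    (S : Finset F) :
    (IsGood e S ∧ x ∈ S ∧ y ∈ S) ↔
      S = {x, y, x + w * (x + y), x + w ^ 2 * (x + y)} := by
  have h2 : (2 : F) = 0 := CharTwo.two_eq_zero
  have he : Even e := by
    have := Nat.gcd_dvd_right m e
    rw [hgcd] at this
    exact even_iff_two_dvd.mpr this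
  have hw3 : w ^ 3 = 1 := by linear_combination (w - 1) * hw
  have hw0 : w ≠ 0 := by rintro rfl; simp at hw
  have hw1 : w ≠ 1 := by
    rintro rfl
    have : (1 : F) = 0 := by linear_combination hw - h2
    exact one_ne_zero this
  have hd : x + y ≠ 0 := by
    intro h
    exact hxy (by linear_combination h - y * h2)
  constructor
  · rintro ⟨⟨hc, hs, hq⟩, hx, hy⟩
    have hc2 : ((S.erase x).erase y).card = 2 := by
      rw [card_erase_of_mem (mem_erase.2 ⟨hxy.symm, hy⟩), card_erase_of_mem hx, hc]
    obtain ⟨z, v, hzv, hS⟩ := card_eq_two.1 hc2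
    have hz : z ∈ (S.erase x).erase y := by rw [hS]; simp
    have hv : v ∈ (S.erase x).erase y := by rw [hS]; simp
    simp only [mem_erase] at hz hv
    have hSe : S = {x, y, z, v} := by
      rw [← hS, insert_erase (mem_erase.2 ⟨hxy.symm, hy⟩), insert_erase hx]
    have hsum : ∀ f : F → F, ∑ i ∈ S, f i = f x + f y + f z + f v := by
      intro f
      rw [hSe, sum_insert, sum_insert, sum_pair hzv]
      · ring
      · simp [hz.1.symm, hv.1.symm]
      · simp [hxy, hz.2.1.symm, hv.2.1.symm]
    rw [hsum] at hs hq
    have hvv : v = x + (x + y) + (x + z) := by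
      linear_combination hs - (2 * x + y + z) * h2
    have hB := form_identity e x (x + y) (x + z)
    rw [← hvv, show x + (x + y) = y by linear_combination x * h2,
      show x + (x + z) = z by linear_combination x * h2, hq] at hB
    obtain ⟨t, ht⟩ : ∃ t, x + z = t * (x + y) := ⟨(x + z) / (x + y), by field_simp⟩
    rw [ht, mul_pow] at hB
    have hte : t ^ 2 ^ e = t := by
      have h3 : (x + y) * (x + y) ^ 2 ^ e * (t ^ 2 ^ e - t) = 0 := by
        linear_combination -hB - t * (x + y) * (x + y) ^ 2 ^ e * h2
      rcases mul_eq_zero.1 h3 with h | h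
      · exact absurd h (mul_ne_zero hd (pow_ne_zero _ hd))
      · exact sub_eq_zero.1 h
    have ht4 := four_of_gcd m e hgcd t (hF t) hte
    have ht0 : t ≠ 0 := by
      rintro rfl
      exact hz.2.1 (by linear_combination ht - x * h2)
    have ht1 : t - 1 ≠ 0 := by
      intro h
      exact hz.1 (by linear_combination ht + h * (x + y))
    have h5 : t * (t - 1) * ((t - w) * (t - w ^ 2)) = 0 := by
      linear_combination ht4 + t * (t - 1) * (- t + w - 1) * hw
    have h6 := (mul_eq_zero.1 h5).resolve_left (mul_ne_zero ht0 ht1)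
    rw [hSe]
    rcases mul_eq_zero.1 h6 with h | h
    · have e1 : z = x + w * (x + y) := by
        linear_combination ht + h * (x + y) - x * h2
      have e2 : v = x + w ^ 2 * (x + y) := by
        linear_combination hvv + e1 - (x + y) * hw + (2 * x + y + w * (x + y)) * h2
      rw [e1, e2]
    · have e1 : z = x + w ^ 2 * (x + y) := by
        linear_combination ht + h * (x + y) - x * h2
      have e2 : v = x + w * (x + y) := by
        linear_combination hvv + e1 - (x + y) * hw + (2 * x + y + w ^ 2 * (x + y)) * h2
      rw [e1, e2, pair_comm]
  · rintro rfl
    have n1 : x ≠ x + w * (x + y) := by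
      intro h
      exact mul_ne_zero hw0 hd (by linear_combination -h)
    have n2 : x ≠ x + w ^ 2 * (x + y) := by
      intro h
      exact mul_ne_zero (pow_ne_zero 2 hw0) hd (by linear_combination -h)
    have n3 : y ≠ x + w * (x + y) := by
      intro h
      exact mul_ne_zero (sub_ne_zero.2 hw1) hd (by linear_combination -h - x * h2)
    have n4 : y ≠ x + w ^ 2 * (x + y) := by
      intro h
      exact mul_ne_zero hw0 hd (by linear_combination h + (x + y) * hw - y * h2)
    have n5 : x + w * (x + y) ≠ x + w ^ 2 * (x + y) := by
      intro h
      exact mul_ne_zero (mul_ne_zero hw0 (sub_ne_zero.2 hw1)) hd (by linear_combination -h)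
    have hsum : ∀ f : F → F, ∑ i ∈ ({x, y, x + w * (x + y), x + w ^ 2 * (x + y)} : Finset F), f i
        = f x + f y + f (x + w * (x + y)) + f (x + w ^ 2 * (x + y)) := by
      intro f
      rw [sum_insert, sum_insert, sum_pair n5]
      · ring
      · simp [n3, n4]
      · simp only [mem_insert, mem_singleton]; tauto
    refine ⟨⟨?_, ?_, ?_⟩, by simp, by simp⟩
    · rw [card_insert_of_notMem, card_insert_of_notMem, card_pair n5]
      · simp [n3, n4]
      · simp only [mem_insert, mem_singleton]; tauto
    · rw [hsum]
      linear_combination (x + y) * hw + x * h2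
    · rw [hsum]
      have hB := form_identity e x (x + y) (w * (x + y))
      rw [show x + (x + y) = y by linear_combination x * h2,
        show y + w * (x + y) = x + w ^ 2 * (x + y) by
          linear_combination -(x + y) * hw + (w * (x + y) + y) * h2] at hB
      rw [hB, mul_pow, frob_omega w hw3 e he]
      linear_combination (x + y) * (x + y) ^ 2 ^ e * w * h2

lemma count_good {F : Type*} [Field F] [Fintype F] [CharP F 2] [DecidableEq F] (m e : ℕ)
    (hcard : Fintype.card F = 2 ^ m)
    (hgcd : Nat.gcd m e = 2) (w : F) (hw : w ^ 2 + w + 1 = 0) :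
    12 * {S : Finset F | IsGood e S}.ncard = 2 ^ m * (2 ^ m - 1) := by
  classical
  have hF : ∀ t : F, t ^ 2 ^ m = t := fun t => by rw [← hcard, FiniteField.pow_card]
  have key := Finset.card_mul_eq_card_mul (s := (univ : Finset F).offDiag)
    (t := univ.filter (fun S : Finset F => IsGood e S)) (fun p S => p.1 ∈ S ∧ p.2 ∈ S)
    (m := 1) (n := 12) ?_ ?_
  · rw [offDiag_card, card_univ, hcard] at key
    have : {S : Finset F | IsGood e S}.ncard
        = (univ.filter (fun S : Finset F => IsGood e S)).card := by
      rw [← Set.ncard_coe_finset]; simp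
    rw [this, mul_comm, ← key, Nat.mul_sub]; simp
  · rintro ⟨x, y⟩ hp
    have hxy : x ≠ y := by simpa using hp
    rw [card_eq_one]
    refine ⟨{x, y, x + w * (x + y), x + w ^ 2 * (x + y)}, ?_⟩
    ext S
    rw [mem_singleton, ← good_iff m e hgcd hF w hw x y hxy]
    simp [bipartiteAbove]
  · intro S hS
    have hg : IsGood e S := by simpa using hS
    have : (univ : Finset F).offDiag.bipartiteBelow (fun p S => p.1 ∈ S ∧ p.2 ∈ S) S
        = S.offDiag := by
      ext ⟨x, y⟩
      simp [bipartiteBelow, mem_offDiag]; tauto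
    rw [this, offDiag_card, hg.1]

lemma exists_omega {F : Type*} [Field F] (m : ℕ) (hm : Even m) (hm0 : 0 < m) (α : F)
    (hα : orderOf α = 2 ^ m - 1) : ∃ w : F, w ^ 2 + w + 1 = 0 := by
  obtain ⟨k, rfl⟩ := hm
  have h3 : 2 ^ (k + k) % 3 = 1 := by
    rw [← two_mul, pow_mul, Nat.pow_mod]; norm_num
  have h4 : 4 ≤ 2 ^ (k + k) := by
    calc 4 = 2 ^ 2 := by norm_num
      _ ≤ _ := Nat.pow_le_pow_right (by norm_num) (by omega)
  obtain ⟨d, hd⟩ : 3 ∣ 2 ^ (k + k) - 1 := by omega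
  refine ⟨α ^ d, ?_⟩
  have h1 : α ^ d ≠ 1 := by
    intro h
    have := Nat.le_of_dvd (by omega) (orderOf_dvd_of_pow_eq_one h)
    omega
  have h5 : (α ^ d) ^ 3 = 1 := by
    rw [← pow_mul, mul_comm, ← hd, ← hα, pow_orderOf_eq_one]
  have : (α ^ d - 1) * ((α ^ d) ^ 2 + α ^ d + 1) = 0 := by linear_combination h5
  exact (mul_eq_zero.1 this).resolve_left (sub_ne_zero.2 h1)

lemma aeval_codePoly {n : ℕ} {F : Type*} [Field F] [Algebra (ZMod 2) F] (c : Fin n → ZMod 2)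
    (β : F) : aeval β (codePoly c) = ∑ i, algebraMap (ZMod 2) F (c i) * β ^ (i : ℕ) := by
  simp [codePoly]

lemma minpoly_coprime (m e : ℕ) (hm : 4 ≤ m) (he1 : 1 ≤ e) (heM : 2 * e ≤ m)
    (α : GaloisField 2 m) (hα : orderOf α = 2 ^ m - 1) :
    IsCoprime (minpoly (ZMod 2) α) (minpoly (ZMod 2) (α ^ (1 + 2 ^ e))) := by
  have hi : ∀ β : GaloisField 2 m, IsIntegral (ZMod 2) β := fun β =>
    Algebra.IsIntegral.isIntegral β
  rcases EuclideanDomain.dvd_or_coprime (minpoly (ZMod 2) α) (minpoly (ZMod 2) (α ^ (1 + 2 ^ e)))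
    (minpoly.irreducible (hi α)) with h | h
  swap
  · exact h
  exfalso
  have hEq : minpoly (ZMod 2) (α ^ (1 + 2 ^ e)) = minpoly (ZMod 2) α :=
    (eq_of_monic_of_associated (minpoly.monic (hi _)) (minpoly.monic (hi _))
      ((minpoly.irreducible (hi _)).associated_of_dvd (minpoly.irreducible (hi _)) h)).symm
  obtain ⟨σ, hσ⟩ := isConjRoot_iff_exists_algEquiv.1 (isConjRoot_def.2 hEq)
  obtain ⟨⟨i, him⟩, rfl⟩ := (FiniteField.bijective_frobeniusAlgEquivOfAlgebraic_pow (ZMod 2)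
    (GaloisField 2 m)).2 σ
  rw [GaloisField.finrank 2 (by omega)] at him
  simp only [AlgEquiv.coe_pow, FiniteField.coe_frobeniusAlgEquivOfAlgebraic_iterate,
    ZMod.card] at hσ
  have h16 : 2 ^ 4 ≤ 2 ^ m := Nat.pow_le_pow_right (by norm_num) hm
  have hlt : ∀ j, j + 1 ≤ m → 2 * 2 ^ j ≤ 2 ^ m := fun j hj => by
    rw [← pow_succ']; exact Nat.pow_le_pow_right (by norm_num) hj
  have := hlt e (by omega)
  have := hlt i (by omega)
  have := pow_injOn_Iio_orderOf (x := α) (by simp only [Set.mem_Iio]; omega)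
    (by simp only [Set.mem_Iio]; omega) hσ
  have he2 : 2 ∣ 2 ^ e := dvd_pow_self 2 (by omega)
  rcases Nat.eq_zero_or_pos i with rfl | hi0
  · simp at this
  · have hi2 : 2 ∣ 2 ^ i := dvd_pow_self 2 (by omega)
    omega

lemma loc_inj (m : ℕ) (hm : 4 ≤ m) (α : GaloisField 2 m) (hα : orderOf α = 2 ^ m - 1) :
    Function.Injective (loc m α) := by
  have h16 : 2 ^ 4 ≤ 2 ^ m := Nat.pow_le_pow_right (by norm_num) hm
  have h0 : α ≠ 0 := by
    rintro rfl
    rw [orderOf_zero] at hα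
    omega
  intro i j hij
  have hi := i.2
  have hj := j.2
  unfold loc at hij
  ext
  split_ifs at hij with h1 h2 h2
  · exact pow_injOn_Iio_orderOf (x := α) (by simp only [Set.mem_Iio]; omega)
      (by simp only [Set.mem_Iio]; omega) hij
  · exact absurd hij (pow_ne_zero _ h0)
  · exact absurd hij.symm (pow_ne_zero _ h0)
  · omega

lemma loc_sum (m : ℕ) (hm : 4 ≤ m) (α : GaloisField 2 m)
    (c : Fin (2 ^ m) → ZMod 2) (k : ℕ) :
    aeval (α ^ (k + 1)) (codePoly
      (fun i : Fin (2 ^ m - 1) => c (Fin.castLE (Nat.sub_le _ _) i)))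
      = ∑ i with c i ≠ 0, (loc m α i) ^ (k + 1) := by
  classical
  rw [aeval_codePoly, sum_filter]
  have h16 : 2 ^ 4 ≤ 2 ^ m := Nat.pow_le_pow_right (by norm_num) hm
  have hc : ∀ a : ZMod 2, a ≠ 0 → a = 1 := by decide
  have hn : 2 ^ m - 1 + 1 = 2 ^ m := by omega
  rw [← (finCongr hn).sum_comp, Fin.sum_univ_castSucc]
  have hlast : loc m α (finCongr hn (Fin.last _)) = 0 := by
    simp [loc]
  rw [hlast, zero_pow (by omega), ite_self, add_zero]
  refine sum_congr rfl fun i _ => ?_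
  have e1 : finCongr hn i.castSucc = Fin.castLE (Nat.sub_le _ _) i := by ext; simp
  have e2 : loc m α (Fin.castLE (Nat.sub_le _ _) i) = α ^ (i : ℕ) := by
    simp [loc]
  rw [e1, e2]
  split_ifs with h
  · rw [hc _ h, map_one, one_mul, ← pow_mul, ← pow_mul, mul_comm]
  · rw [not_not.1 h, map_zero, zero_mul]

lemma mem_CEbar_iff_s4 (m e : ℕ) (hm : 4 ≤ m) (he1 : 1 ≤ e) (heM : 2 * e ≤ m)
    (α : GaloisField 2 m) (hα : orderOf α = 2 ^ m - 1) (c : Fin (2 ^ m) → ZMod 2) :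
    (c ∈ CEbar m e α ∧ hammingNorm c = 4) ↔
      IsGood e ((univ.filter (fun i => c i ≠ 0)).map ⟨loc m α, loc_inj m hm α hα⟩) := by
  have hc : ∀ a : ZMod 2, a = if a ≠ 0 then 1 else 0 := by decide
  have hsum : hammingNorm c = 4 → ∑ i, c i = 0 := by
    intro h
    rw [sum_congr rfl (fun i _ => hc (c i)), sum_boole]
    change ((hammingNorm c : ℕ) : ZMod 2) = 0
    rw [h]; rfl
  have h1 := loc_sum m hm α c 0
  have h2 := loc_sum m hm α c (2 ^ e)
  simp only [zero_add, pow_one] at h1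
  rw [add_comm (2 ^ e) 1] at h2
  unfold IsGood
  rw [card_map, sum_map, sum_map]
  simp only [Function.Embedding.coeFn_mk]
  rw [← h1, ← h2]
  simp only [CEbar, CE, gE, Set.mem_ofPred_eq]
  have hmul : ∀ p : Polynomial (ZMod 2),
      minpoly (ZMod 2) α * minpoly (ZMod 2) (α ^ (1 + 2 ^ e)) ∣ p ↔
        aeval α p = 0 ∧ aeval (α ^ (1 + 2 ^ e)) p = 0 := fun p => by
    rw [← minpoly.dvd_iff, ← minpoly.dvd_iff]
    exact ⟨fun h => ⟨dvd_of_mul_right_dvd h, dvd_of_mul_left_dvd h⟩,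
      fun h => (minpoly_coprime m e hm he1 heM α hα).mul_dvd h.1 h.2⟩
  rw [hmul]
  change _ ↔ hammingNorm c = 4 ∧ _
  tauto

end helpers

/-- For `m ≡ 0 (mod 4)` (with `m ≥ 4`) and `1 ≤ e ≤ m/2` with
`gcd(m,e) = 2`, the number of weight-4 codewords of `C̄_E` is `Ā₄ = 2^m(2^m − 1)/12`. -/
theorem number_of_weight_four_codewords
    (m e : ℕ) (hm4 : m % 4 = 0) (hm : 4 ≤ m)
    (he1 : 1 ≤ e) (heM : 2 * e ≤ m) (hgcd : Nat.gcd m e = 2)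
    (α : GaloisField 2 m) (hα : orderOf α = 2 ^ m - 1) :
    12 * {c : Fin (2 ^ m) → ZMod 2 | c ∈ CEbar m e α ∧ hammingNorm c = 4}.ncard =
      2 ^ m * (2 ^ m - 1) := by
  classical
  have h16 : 2 ^ 4 ≤ 2 ^ m := Nat.pow_le_pow_right (by norm_num) hm
  have hcardN : Nat.card (GaloisField 2 m) = 2 ^ m := GaloisField.card 2 m (by omega)
  haveI : Fintype (GaloisField 2 m) := Fintype.ofFinite _
  have hcard : Fintype.card (GaloisField 2 m) = 2 ^ m := by
    rw [← Nat.card_eq_fintype_card, hcardN]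
  obtain ⟨w, hw⟩ := exists_omega m (by rw [Nat.even_iff]; omega) (by omega) α hα
  rw [← count_good m e hcard hgcd w hw]
  congr 1
  have hinj := loc_inj m hm α hα
  have hsurj : Function.Surjective (loc m α) :=
    ((Fintype.bijective_iff_injective_and_card _).2 ⟨hinj, by rw [hcard, Fintype.card_fin]⟩).2
  refine Set.ncard_congr
    (fun c _ => (univ.filter (fun i => c i ≠ 0)).map ⟨loc m α, hinj⟩) ?_ ?_ ?_
  · intro c hc
    exact (mem_CEbar_iff_s4 m e hm he1 heM α hα c).1 hc
  · intro c d _ _ h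
    have h := map_injective _ h
    have hz : ∀ a b : ZMod 2, (a ≠ 0 ↔ b ≠ 0) → a = b := by decide
    funext i
    apply hz
    have := Finset.ext_iff.1 h i
    simpa only [mem_filter, mem_univ, true_and] using this
  · intro S hS
    have hmap : (univ.filter (fun i => (if loc m α i ∈ S then (1 : ZMod 2) else 0) ≠ 0)).map
        ⟨loc m α, hinj⟩ = S := by
      ext x
      obtain ⟨i, rfl⟩ := hsurj x
      simp [hinj.eq_iff]
    refine ⟨fun i => if loc m α i ∈ S then 1 else 0, ?_, hmap⟩
    refine (mem_CEbar_iff_s4 m e hm he1 heM α hα _).2 ?_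
    have hS' : IsGood e S := hS
    rw [← hmap] at hS'
    exact hS'
end

section
/- Let m ≡ 0 (mod 4) and let e be an integer with 1 ≤ e ≤ m/2 and gcd(m,e) = 2. Then the number of codewords of Hamming weight 6 in the extended code C̄_E equals Ā_6 = 2^m(2^m − 1)(2^{2m−4} + 2^{m−1} + 6)/45. -/
open Polynomial Finset

/-- Newton's identities for a `±1`-valued function: the sixth elementary symmetric sum. -/
theorem aux_newton {F : Type*} [Fintype F] [DecidableEq F] (f : F → ℤ) (hf : ∀ x, f x ^ 2 = 1)
    (S q : ℤ) (hS : S = ∑ x, f x) (hq : q = Fintype.card F) :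
    720 * ∑ T ∈ powersetCard 6 (univ : Finset F), ∏ x ∈ T, f x =
      S ^ 6 - (15 * q - 40) * S ^ 4 + (45 * q ^ 2 - 210 * q + 184) * S ^ 2
        - 15 * q * (q - 2) * (q - 4) := by
  have key : ∀ k : ℕ, (k : ℤ) * ∑ T ∈ powersetCard k (univ : Finset F), ∏ x ∈ T, f x =
      (-1) ^ (k + 1) * ∑ a ∈ antidiagonal k with a.1 < k,
        (-1) ^ a.1 * (∑ T ∈ powersetCard a.1 (univ : Finset F), ∏ x ∈ T, f x) *
          ∑ x, f x ^ a.2 := by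
    intro k
    have h := congrArg (MvPolynomial.aeval f) (MvPolynomial.mul_esymm_eq_sum F ℤ k)
    simpa [MvPolynomial.esymm, MvPolynomial.psum] using h
  set E : ℕ → ℤ := fun k => ∑ T ∈ powersetCard k (univ : Finset F), ∏ x ∈ T, f x with hE
  have p2 : ∑ x, f x ^ 2 = q := by simp [hf, hq]
  have f3 : ∀ x, f x ^ 3 = f x := fun x => by linear_combination f x * hf x
  have f4 : ∀ x, f x ^ 4 = 1 := fun x => by linear_combination (f x ^ 2 + 1) * hf x
  have f5 : ∀ x, f x ^ 5 = f x := fun x => by linear_combination (f x ^ 3 + f x) * hf x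
  have f6 : ∀ x, f x ^ 6 = 1 := fun x => by
    linear_combination (f x ^ 4 + f x ^ 2 + 1) * hf x
  have p4 : ∑ x, f x ^ 4 = q := by simp [f4, hq]
  have p6 : ∑ x, f x ^ 6 = q := by simp [f6, hq]
  have p1 : ∑ x, f x ^ 1 = S := by simp [hS]
  have p3 : ∑ x, f x ^ 3 = S := by simp [f3, hS]
  have p5 : ∑ x, f x ^ 5 = S := by simp [f5, hS]
  have e0 : E 0 = 1 := by simp [hE]
  have a1 : ((antidiagonal 1).filter fun a : ℕ × ℕ => a.1 < 1) = {(0,1)} := by decide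
  have a2 : ((antidiagonal 2).filter fun a : ℕ × ℕ => a.1 < 2) = {(0,2),(1,1)} := by decide
  have a3 : ((antidiagonal 3).filter fun a : ℕ × ℕ => a.1 < 3) = {(0,3),(1,2),(2,1)} := by decide
  have a4 : ((antidiagonal 4).filter fun a : ℕ × ℕ => a.1 < 4) =
    {(0,4),(1,3),(2,2),(3,1)} := by decide
  have a5 : ((antidiagonal 5).filter fun a : ℕ × ℕ => a.1 < 5) =
    {(0,5),(1,4),(2,3),(3,2),(4,1)} := by decide
  have a6 : ((antidiagonal 6).filter fun a : ℕ × ℕ => a.1 < 6) =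
    {(0,6),(1,5),(2,4),(3,3),(4,2),(5,1)} := by decide
  have key' : ∀ k : ℕ, (k : ℤ) * E k = (-1) ^ (k + 1) * ∑ a ∈ antidiagonal k with a.1 < k,
        (-1) ^ a.1 * E a.1 * ∑ x, f x ^ a.2 := key
  have k1 := key' 1
  have k2 := key' 2
  have k3 := key' 3
  have k4 := key' 4
  have k5 := key' 5
  have k6 := key' 6
  rw [a1] at k1
  rw [a2] at k2
  rw [a3] at k3
  rw [a4] at k4
  rw [a5] at k5
  rw [a6] at k6
  have n : ∀ a b c d : ℕ, (a, b) = (c, d) ↔ a = c ∧ b = d := fun a b c d => Prod.mk_inj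
  rw [sum_singleton] at k1
  repeat rw [sum_insert (by decide)] at k2
  repeat rw [sum_insert (by decide)] at k3
  repeat rw [sum_insert (by decide)] at k4
  repeat rw [sum_insert (by decide)] at k5
  repeat rw [sum_insert (by decide)] at k6
  rw [sum_singleton] at k2 k3 k4 k5 k6
  simp only [p1, p2, p3, p4, p5, p6, e0] at k1 k2 k3 k4 k5 k6
  push_cast at k1 k2 k3 k4 k5 k6
  have g1 : E 1 = S := by linarith
  rw [g1] at k2 k3 k4 k5 k6
  have g2 : 2 * E 2 = S ^ 2 - q := by linarith
  have g3 : 3 * E 3 = S * E 2 - (q - 1) * S := by linarith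
  have g4 : 4 * E 4 = S * E 3 - (q - 2) * E 2 := by linarith
  have g5 : 5 * E 5 = S * E 4 - (q - 3) * E 3 := by linarith
  have g6 : 6 * E 6 = S * E 5 - (q - 4) * E 4 := by linarith
  have h3 : 6 * E 3 = S ^ 3 - (3 * q - 2) * S := by linear_combination 2 * g3 + S * g2
  have h4 : 24 * E 4 = S ^ 4 - (6 * q - 8) * S ^ 2 + 3 * q * (q - 2) := by
    linear_combination 6 * g4 + S * h3 - 3 * (q - 2) * g2
  have h5 : 120 * E 5 = S ^ 5 - (10 * q - 20) * S ^ 3 + (15 * q ^ 2 - 50 * q + 24) * S := by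
    linear_combination 24 * g5 + S * h4 - 4 * (q - 3) * h3
  change 720 * E 6 = _
  linear_combination 120 * g6 + S * h5 - 5 * (q - 4) * h4

/-- A `±1`-valued trace character. -/
theorem aux_char (F : Type*) [Field F] [Fintype F] [DecidableEq F] [Algebra (ZMod 2) F]
    [CharP F 2] : ∃ ψ : AddChar F ℤ, ψ.IsPrimitive ∧ (∀ x, ψ x ^ 2 = 1) ∧
      ∀ x (e : ℕ), ψ (x ^ 2 ^ e) = ψ x := by
  have h1 : (-1 : ℤ) ^ 2 = 1 := by norm_num
  refine ⟨(AddChar.zmodChar 2 h1).compAddMonoidHom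
    (Algebra.trace (ZMod 2) F).toAddMonoidHom, ?_, ?_, ?_⟩
  · apply AddChar.IsPrimitive.of_ne_one
    obtain ⟨x, hx⟩ := Algebra.trace_surjective (ZMod 2) F 1
    intro h
    have := DFunLike.congr_fun h x
    simp [hx, AddChar.zmodChar_apply] at this
    revert this
    decide
  · intro x
    simp [AddChar.zmodChar_apply, ← pow_mul, mul_comm]
  · intro x e
    have : ∀ y : F, Algebra.trace (ZMod 2) F (y ^ 2) = Algebra.trace (ZMod 2) F y := by
      intro y
      have h := Algebra.trace_eq_of_algEquiv
        (FiniteField.frobeniusAlgEquivOfAlgebraic (ZMod 2) F) y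
      simpa [ZMod.card] using h
    have h2 : Algebra.trace (ZMod 2) F (x ^ 2 ^ e) = Algebra.trace (ZMod 2) F x := by
      induction e with
      | zero => simp
      | succ k ih => rw [pow_succ, pow_mul, this, ih]
    simp [h2]

/-- Number of roots of unity. -/
theorem aux_roots (F : Type*) [Field F] [Fintype F] [DecidableEq F] (m d : ℕ)
    (hF : Fintype.card F = 2 ^ m) :
    #{x : F | x ^ (2 ^ d - 1) = 1 ∧ x ≠ 0} = 2 ^ Nat.gcd m d - 1 := by
  have h := IsCyclic.card_powMonoidHom_ker (G := Fˣ) (2 ^ d - 1)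
  rw [Nat.card_units, Nat.card_eq_fintype_card (α := F), hF, Nat.pow_sub_one_gcd_pow_sub_one] at h
  rw [← h, Nat.card_eq_fintype_card, ← Fintype.card_coe]
  symm
  apply Fintype.card_of_bijective
    (f := fun u : (powMonoidHom (2 ^ d - 1) : Fˣ →* Fˣ).ker =>
      (⟨((u : Fˣ) : F), by
        have := u.2
        rw [MonoidHom.mem_ker, powMonoidHom_apply] at this
        have := congrArg Units.val this
        simpa using this⟩ : {x // x ∈ ({x : F | x ^ (2 ^ d - 1) = 1 ∧ x ≠ 0} : Finset F)}))
  constructor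
  · intro u v huv
    exact Subtype.ext (Units.ext (congrArg Subtype.val huv))
  · rintro ⟨x, hx'⟩
    have hx := (mem_filter.1 hx').2
    refine ⟨⟨Units.mk0 x hx.2, ?_⟩, ?_⟩
    · rw [MonoidHom.mem_ker, powMonoidHom_apply]
      ext
      simpa using hx.1
    · simp

/-- The radical of the quadratic form attached to `a`. -/
def auxW (F : Type*) [Field F] [Fintype F] [DecidableEq F] (s : ℕ) (a : F) : Finset F :=
  {z : F | a * z + a ^ s * z ^ (s * s) = 0}

theorem aux_S2 (F : Type*) [Field F] [Fintype F] [DecidableEq F] [CharP F 2]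
    (e : ℕ) (ψ : AddChar F ℤ) (hψ : ψ.IsPrimitive) (hfr : ∀ x (e : ℕ), ψ (x ^ 2 ^ e) = ψ x)
    (a b : F) :
    (∑ x, ψ (a * x ^ (1 + 2 ^ e) + b * x)) ^ 2 =
      Fintype.card F * ∑ z ∈ auxW F (2 ^ e) a, ψ (a * z ^ (1 + 2 ^ e) + b * z) ∧
    (∑ z ∈ auxW F (2 ^ e) a, ψ (a * z ^ (1 + 2 ^ e) + b * z)) ^ 2 =
      #(auxW F (2 ^ e) a) * ∑ z ∈ auxW F (2 ^ e) a, ψ (a * z ^ (1 + 2 ^ e) + b * z) := by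
  set s := 2 ^ e with hs
  have hadd : ∀ x y : F, (x + y) ^ s = x ^ s + y ^ s := fun x y => add_pow_char_pow x y 2 e
  have hadd2 : ∀ x y : F, (x + y) ^ (s * s) = x ^ (s * s) + y ^ (s * s) := fun x y => by
    rw [pow_mul, hadd, hadd, ← pow_mul, ← pow_mul]
  have hcross : ∀ x z : F, ψ (a * (x ^ s * z + x * z ^ s)) =
      ψ (x ^ s * (a * z + a ^ s * z ^ (s * s))) := by
    intro x z
    have h1 : a * (x ^ s * z + x * z ^ s) = a * z * x ^ s + a * z ^ s * x := by ring
    rw [h1, AddChar.map_add_eq_mul, ← hfr (a * z ^ s * x) e, ← AddChar.map_add_eq_mul]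
    congr 1
    rw [← hs, mul_pow, mul_pow, ← pow_mul]
    ring
  have hbij : Function.Bijective (fun x : F => x ^ s) := bijective_iterateFrobenius F 2 e
  have hsum : ∀ z : F, ∑ x, ψ (a * (x ^ s * z + x * z ^ s)) =
      if a * z + a ^ s * z ^ (s * s) = 0 then (Fintype.card F : ℤ) else 0 := by
    intro z
    simp_rw [hcross]
    rw [hbij.sum_comp (fun y => ψ (y * (a * z + a ^ s * z ^ (s * s))))]
    rw [AddChar.sum_mulShift _ hψ]
    split_ifs <;> simp
  have hexp : ∀ x z : F, a * (x + z) ^ (1 + s) + b * (x + z) =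
      (a * x ^ (1 + s) + b * x) + (a * z ^ (1 + s) + b * z) + a * (x ^ s * z + x * z ^ s) := by
    intro x z
    rw [pow_add, hadd]
    ring
  have h2 : ∀ t : F, t + t = 0 := fun t => CharTwo.add_self_eq_zero t
  set g : F → ℤ := fun z => ψ (a * z ^ (1 + s) + b * z) with hg
  have hgg : ∀ x z, g (x + z) = g x * g z * ψ (a * (x ^ s * z + x * z ^ s)) := by
    intro x z
    simp only [hg]
    rw [hexp, AddChar.map_add_eq_mul, AddChar.map_add_eq_mul]
  have hgx : ∀ x, g x * g x = 1 := by
    intro x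
    simp only [hg]
    rw [← AddChar.map_add_eq_mul, h2, AddChar.map_zero_eq_one]
  constructor
  · change (∑ x, g x) ^ 2 = _ * ∑ z ∈ auxW F s a, g z
    calc (∑ x, g x) ^ 2 = ∑ x, ∑ y, g x * g y := by rw [sq, sum_mul_sum]
      _ = ∑ x, ∑ z, g x * g (x + z) := by
          refine sum_congr rfl fun x _ => ?_
          exact (Equiv.sum_comp (Equiv.addLeft x) (fun y => g x * g y)).symm
      _ = ∑ x, ∑ z, g z * ψ (a * (x ^ s * z + x * z ^ s)) := by
          refine sum_congr rfl fun x _ => sum_congr rfl fun z _ => ?_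
          rw [hgg]
          linear_combination g z * ψ (a * (x ^ s * z + x * z ^ s)) * hgx x
      _ = ∑ z, g z * if a * z + a ^ s * z ^ (s * s) = 0 then (Fintype.card F : ℤ) else 0 := by
          rw [sum_comm]
          refine sum_congr rfl fun z _ => ?_
          rw [← mul_sum, hsum]
      _ = _ := by
          rw [auxW, sum_filter, mul_sum]
          refine sum_congr rfl fun z _ => ?_
          split_ifs <;> simp [mul_comm]
  · change (∑ z ∈ auxW F s a, g z) ^ 2 = _ * ∑ z ∈ auxW F s a, g z
    have hW : ∀ z, z ∈ auxW F s a ↔ a * z + a ^ s * z ^ (s * s) = 0 := by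
      intro z
      simp [auxW]
    rw [sq, sum_mul_sum, ← nsmul_eq_mul, ← sum_const]
    refine sum_congr rfl fun x hx => ?_
    have hx' := (hW x).1 hx
    have hclosed : ∀ y, y ∈ auxW F s a → x + y ∈ auxW F s a := by
      intro y hy
      rw [hW] at hy ⊢
      rw [hadd2]
      linear_combination hx' + hy
    refine sum_bij' (fun y _ => x + y) (fun y _ => x + y) hclosed hclosed ?_ ?_ ?_
    · intro y _
      rw [← add_assoc, h2, zero_add]
    · intro y _
      rw [← add_assoc, h2, zero_add]
    · intro y hy
      have h0 : ψ (a * (x ^ s * y + x * y ^ s)) = 1 := by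
        rw [hcross, (hW y).1 hy, mul_zero, AddChar.map_zero_eq_one]
      rw [hgg, h0, mul_one]

theorem aux_W_sum (F : Type*) [Field F] [Fintype F] [DecidableEq F] [CharP F 2]
    (m e : ℕ) (hF : Fintype.card F = 2 ^ m) (hgcd : Nat.gcd m e = 2) :
    ∑ a : F, (#(auxW F (2 ^ e) a) : ℤ) = 5 * Fintype.card F - 4 := by
  set s := 2 ^ e with hs
  have hs1 : 1 ≤ s := Nat.one_le_two_pow
  have hs0 : s ≠ 0 := by omega
  have h2 : ∀ u v : F, u + v = 0 ↔ u = v := fun u v => CharTwo.add_eq_zero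
  have hroots := aux_roots F m e hF
  rw [hgcd] at hroots
  have hz : ∀ z : F, #{a : F | a * z + a ^ s * z ^ (s * s) = 0} =
      if z = 0 then Fintype.card F else 4 := by
    intro z
    split_ifs with h
    · subst h
      simp [hs0]
    · rw [show ({a : F | a * z + a ^ s * z ^ (s * s) = 0} : Finset F) = insert 0
        (({x : F | x ^ (2 ^ e - 1) = 1 ∧ x ≠ 0} : Finset F).map
          ⟨fun x => x * (z ^ (s + 1))⁻¹, mul_left_injective₀ (by positivity)⟩) from ?_]
      · rw [card_insert_of_notMem (by simp [h]), card_map, hroots]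
        norm_num
      · ext a
        have hzp : z ^ (s + 1) ≠ 0 := pow_ne_zero _ h
        simp only [mem_filter, mem_univ, true_and, mem_insert, mem_map,
          Function.Embedding.coeFn_mk]
        have hss : a * (z ^ (s+1)) * ((a * z ^ (s + 1)) ^ (s - 1)) =
            z ^ s * (a ^ s * z ^ (s * s)) := by
          rw [← pow_succ', Nat.sub_add_cancel hs1]
          ring
        rw [h2]
        constructor
        · intro ha
          by_cases ha0 : a = 0
          · left; exact ha0
          · right
            refine ⟨a * z ^ (s + 1), ⟨?_, mul_ne_zero ha0 hzp⟩, ?_⟩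
            · apply mul_left_cancel₀ (mul_ne_zero ha0 hzp)
              rw [← hs, hss, ← ha]
              ring
            · field_simp
        · rintro (ha | ⟨x, ⟨hx1, hx0⟩, rfl⟩)
          · simp [ha, hs0]
          · rw [inv_mul_cancel_right₀ hzp, hx1] at hss
            apply mul_left_cancel₀ (pow_ne_zero s h)
            rw [← hss]
            field_simp
            ring
  have hswap : ∑ a : F, #(auxW F s a) =
      ∑ z : F, #{a : F | a * z + a ^ s * z ^ (s * s) = 0} := by
    simp only [auxW, card_filter]
    rw [sum_comm]
  rw [← Nat.cast_sum, hswap]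
  simp_rw [hz]
  rw [← add_sum_erase univ _ (mem_univ (0 : F))]
  rw [sum_congr rfl (g := fun _ => 4) (by
    intro x hx
    simp [ne_of_mem_erase hx])]
  have : 1 ≤ Fintype.card F := Fintype.card_pos
  simp [card_erase_of_mem]
  push_cast [this]
  ring

theorem aux_W_sq (F : Type*) [Field F] [Fintype F] [DecidableEq F] [CharP F 2]
    (m e : ℕ) (hF : Fintype.card F = 2 ^ m) (hgcd : Nat.gcd m (e + e) = 4) (a : F) (ha : a ≠ 0) :
    (#(auxW F (2 ^ e) a) : ℤ) ^ 2 = 17 * #(auxW F (2 ^ e) a) - 16 := by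
  set s := 2 ^ e with hs
  have hs1 : 1 ≤ s := Nat.one_le_two_pow
  have hs0 : s ≠ 0 := by omega
  have h2 : ∀ u v : F, u + v = 0 ↔ u = v := fun u v => CharTwo.add_eq_zero
  have hroots := aux_roots F m (e + e) hF
  rw [hgcd, pow_add, ← hs] at hroots
  have hss1 : 1 ≤ s * s := Nat.mul_pos hs1 hs1
  have h0 : (0 : F) ∈ auxW F s a := by simp [auxW, hs0]
  by_cases hex : ∃ z ∈ auxW F s a, z ≠ 0
  · obtain ⟨z, hz, hz0⟩ := hex
    have hz' : a * z = a ^ s * z ^ (s * s) := by simpa [auxW, h2] using hz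
    have : auxW F s a = insert 0
        (({x : F | x ^ (s * s - 1) = 1 ∧ x ≠ 0} : Finset F).map
          ⟨fun x => x * z, mul_left_injective₀ hz0⟩) := by
      ext w
      simp only [auxW, mem_filter, mem_univ, true_and, mem_insert, mem_map,
          Function.Embedding.coeFn_mk]
      rw [h2]
      have hx : ∀ x : F, a * (x * z) = a ^ s * (x * z) ^ (s * s) ↔ x = x ^ (s * s) := by
        intro x
        have haz : a * z ≠ 0 := mul_ne_zero ha hz0
        rw [mul_pow, show a * (x * z) = a * z * x by ring,
          show a ^ s * (x ^ (s * s) * z ^ (s * s)) = a ^ s * z ^ (s * s) * x ^ (s * s) by ring,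
          ← hz', mul_right_inj' haz]
      have hx2 : ∀ x : F, x ≠ 0 → (x = x ^ (s * s) ↔ x ^ (s * s - 1) = 1) := by
        intro x hx0
        conv_lhs => rw [← Nat.sub_add_cancel hss1, pow_succ']
        constructor
        · intro h
          apply mul_left_cancel₀ hx0
          rw [← h, mul_one]
        · intro h
          rw [h, mul_one]
      constructor
      · intro hw
        by_cases hw0 : w = 0
        · left; exact hw0
        · right
          have hwz : w / z * z = w := div_mul_cancel₀ w hz0
          have hwz0 : w / z ≠ 0 := div_ne_zero hw0 hz0
          rw [← hwz, hx, hx2 _ hwz0] at hw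
          exact ⟨w / z, ⟨hw, hwz0⟩, hwz⟩
      · rintro (h | ⟨x, ⟨hx1, hx0⟩, rfl⟩)
        · simp [h, hs0]
        · rw [hx, hx2 x hx0]
          exact hx1
    rw [this, card_insert_of_notMem (by simp [hz0]), card_map, hroots]
    norm_num
  · have : auxW F s a = {0} := by
      ext w
      rw [mem_singleton]
      constructor
      · intro hw
        by_contra hw0
        exact hex ⟨w, hw, hw0⟩
      · rintro rfl
        exact h0
    rw [this]
    norm_num

theorem aux_map_sum {F : Type*} [Field F] [DecidableEq F] (ψ : AddChar F ℤ) (T : Finset F)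
    (f : F → F) : ψ (∑ x ∈ T, f x) = ∏ x ∈ T, ψ (f x) := by
  induction T using Finset.induction_on with
  | empty => simp
  | insert a T ha ih => rw [sum_insert ha, prod_insert ha, AddChar.map_add_eq_mul, ih]

theorem aux_count (F : Type*) [Field F] [Fintype F] [DecidableEq F] [Algebra (ZMod 2) F]
    [CharP F 2] (m e : ℕ) (hF : Fintype.card F = 2 ^ m) (hgcd : Nat.gcd m e = 2)
    (hgcd2 : Nat.gcd m (e + e) = 4) (q : ℤ) (hq : q = Fintype.card F) :
    720 * (#{T ∈ powersetCard 6 (univ : Finset F) |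
        ∑ x ∈ T, x = 0 ∧ ∑ x ∈ T, x ^ (1 + 2 ^ e) = 0} : ℤ) =
      q * (q - 1) * (q ^ 2 + 8 * q + 96) := by
  obtain ⟨ψ, hψ, hsq, hfr⟩ := aux_char F
  have hq0 : q ≠ 0 := by
    rw [hq]
    exact_mod_cast Fintype.card_ne_zero
  set S : F → F → ℤ := fun a b => ∑ x, ψ (a * x ^ (1 + 2 ^ e) + b * x) with hS
  have hnewton := fun a b => aux_newton (fun x => ψ (a * x ^ (1 + 2 ^ e) + b * x))
    (fun x => hsq _) (S a b) q rfl hq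
  set w : F → ℤ := fun a => (#(auxW F (2 ^ e) a) : ℤ) with hw
  have hS4 : ∀ a b, S a b ^ 4 = q * w a * S a b ^ 2 := by
    intro a b
    obtain ⟨h1, h2⟩ := aux_S2 F e ψ hψ hfr a b
    rw [← hq] at h1
    change S a b ^ 2 = _ at h1
    rw [show S a b ^ 4 = (S a b ^ 2) ^ 2 by ring, h1, mul_pow, h2]
    ring
  have hS6 : ∀ a b, S a b ^ 6 = q ^ 2 * w a ^ 2 * S a b ^ 2 := by
    intro a b
    linear_combination (S a b ^ 2 + q * w a) * hS4 a b
  have hS2 : ∀ a, ∑ b, S a b ^ 2 = q ^ 2 := by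
    intro a
    have : ∀ b, S a b ^ 2 = ∑ x, ∑ y, ψ (a * x ^ (1 + 2 ^ e) + a * y ^ (1 + 2 ^ e)) *
        ψ (b * (x + y)) := by
      intro b
      rw [sq, hS, sum_mul_sum]
      refine sum_congr rfl fun x _ => sum_congr rfl fun y _ => ?_
      rw [← AddChar.map_add_eq_mul, ← AddChar.map_add_eq_mul]
      congr 1
      ring
    simp_rw [this]
    rw [sum_comm]
    have : ∀ x, ∑ b, ∑ y, ψ (a * x ^ (1 + 2 ^ e) + a * y ^ (1 + 2 ^ e)) *
        ψ (b * (x + y)) = q := by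
      intro x
      rw [sum_comm]
      simp_rw [← mul_sum, AddChar.sum_mulShift _ hψ, CharTwo.add_eq_zero]
      simp [hq, CharTwo.add_self_eq_zero]
    simp_rw [this]
    simp [← hq, sq]
  have hwsum : ∑ a, w a = 5 * q - 4 := by
    rw [hq]
    exact aux_W_sum F m e hF hgcd
  have hw0 : w 0 = q := by
    simp [hw, auxW, hq]
  have hwsq : ∑ a, w a ^ 2 = q ^ 2 + 52 * (q - 1) := by
    have h1 := add_sum_erase univ w (mem_univ (0 : F))
    rw [← add_sum_erase univ _ (mem_univ (0 : F))]
    rw [sum_congr rfl (fun x hx => aux_W_sq F m e hF hgcd2 x (ne_of_mem_erase hx)), hw0]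
    rw [sum_sub_distrib, ← mul_sum]
    change _ + (17 * ∑ x ∈ univ.erase 0, w x - _) = _
    have h3 : ∑ x ∈ (univ : Finset F).erase 0, (16 : ℤ) = 16 * (q - 1) := by
      have : 1 ≤ Fintype.card F := Fintype.card_pos
      simp [card_erase_of_mem, hq]
      push_cast [this]
      ring
    rw [h3]
    rw [hwsum, hw0] at h1
    linear_combination 17 * h1
  have hcount : ∑ a, ∑ b, ∑ T ∈ powersetCard 6 (univ : Finset F),
      ∏ x ∈ T, ψ (a * x ^ (1 + 2 ^ e) + b * x) =
      q ^ 2 * (#{T ∈ powersetCard 6 (univ : Finset F) |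
        ∑ x ∈ T, x = 0 ∧ ∑ x ∈ T, x ^ (1 + 2 ^ e) = 0} : ℤ) := by
    have hT : ∀ a b, ∀ T : Finset F, ∏ x ∈ T, ψ (a * x ^ (1 + 2 ^ e) + b * x) =
        ψ (a * ∑ x ∈ T, x ^ (1 + 2 ^ e)) * ψ (b * ∑ x ∈ T, x) := by
      intro a b T
      rw [← AddChar.map_add_eq_mul, mul_sum, mul_sum, ← sum_add_distrib,
        aux_map_sum]
    simp_rw [hT]
    have : ∀ a, ∑ b, ∑ T ∈ powersetCard 6 (univ : Finset F),
        ψ (a * ∑ x ∈ T, x ^ (1 + 2 ^ e)) * ψ (b * ∑ x ∈ T, x) =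
        ∑ T ∈ powersetCard 6 (univ : Finset F), ψ (a * ∑ x ∈ T, x ^ (1 + 2 ^ e)) *
          if ∑ x ∈ T, x = 0 then q else 0 := by
      intro a
      rw [sum_comm]
      refine sum_congr rfl fun T _ => ?_
      rw [← mul_sum, AddChar.sum_mulShift _ hψ, hq]
      split_ifs <;> simp
    simp_rw [this]
    rw [sum_comm, card_filter]
    push_cast
    rw [mul_sum]
    refine sum_congr rfl fun T _ => ?_
    rw [← sum_mul, AddChar.sum_mulShift _ hψ]
    by_cases h1 : ∑ x ∈ T, x = 0 <;> by_cases h2 : ∑ x ∈ T, x ^ (1 + 2 ^ e) = 0 <;>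
      simp [h1, h2, hq, sq]
  have hfinal : 720 * (q ^ 2 * (#{T ∈ powersetCard 6 (univ : Finset F) |
        ∑ x ∈ T, x = 0 ∧ ∑ x ∈ T, x ^ (1 + 2 ^ e) = 0} : ℤ)) =
      ∑ a, ∑ b, ((q ^ 2 * w a ^ 2 - (15 * q - 40) * (q * w a) +
        (45 * q ^ 2 - 210 * q + 184)) * S a b ^ 2 - 15 * q * (q - 2) * (q - 4)) := by
    rw [← hcount, mul_sum]
    refine sum_congr rfl fun a _ => ?_
    rw [mul_sum]
    refine sum_congr rfl fun b _ => ?_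
    rw [hnewton, hS6, hS4]
    ring
  simp_rw [sum_sub_distrib, ← mul_sum, hS2, ← sum_mul, sum_add_distrib, sum_sub_distrib,
    ← mul_sum, hwsum, hwsq] at hfinal
  simp only [sum_const, card_univ, nsmul_eq_mul, ← hq] at hfinal
  apply mul_left_cancel₀ (pow_ne_zero 2 hq0)
  linear_combination hfinal

theorem aux_gcd (m e : ℕ) (hm4 : m % 4 = 0) (hgcd : Nat.gcd m e = 2) :
    Nat.gcd m (e + e) = 4 ∧ 5 ∣ 1 + 2 ^ e ∧ 5 ∣ 2 ^ m - 1 := by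
  obtain ⟨k, rfl⟩ : 4 ∣ m := Nat.dvd_of_mod_eq_zero hm4
  obtain ⟨f, rfl⟩ : 2 ∣ e := hgcd ▸ Nat.gcd_dvd_right (4 * k) e
  have h1 : Nat.gcd (2 * k) f = 1 := by
    rw [show 4 * k = 2 * (2 * k) by ring, Nat.gcd_mul_left] at hgcd
    omega
  have hfk : Nat.gcd k f = 1 := Nat.Coprime.coprime_mul_left (k := 2) h1
  have hf2 : f % 2 = 1 := by
    have : Nat.Coprime 2 f := Nat.Coprime.coprime_mul_right (k := k) (by simpa [mul_comm] using h1)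
    rcases Nat.mod_two_eq_zero_or_one f with h | h
    · have := Nat.dvd_gcd (dvd_refl 2) (Nat.dvd_of_mod_eq_zero h)
      rw [Nat.Coprime.gcd_eq_one ‹_›] at this
      omega
    · exact h
  refine ⟨?_, ?_, ?_⟩
  · rw [show 2 * f + 2 * f = 4 * f by ring, Nat.gcd_mul_left, hfk]
  · obtain ⟨j, rfl⟩ : ∃ j, f = 2 * j + 1 := ⟨f / 2, by omega⟩
    rw [show 2 * (2 * j + 1) = 4 * j + 2 by ring, pow_add, pow_mul]
    have := Nat.pow_mod 16 j 5
    norm_num at this ⊢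
    omega
  · rw [pow_mul]
    have := Nat.pow_mod 16 k 5
    norm_num at this ⊢
    omega

theorem aux_dvd (m e : ℕ) (hm : 4 ≤ m) (h5 : 5 ∣ 1 + 2 ^ e) (h5' : 5 ∣ 2 ^ m - 1)
    (α : GaloisField 2 m) (hα : orderOf α = 2 ^ m - 1) (p : Polynomial (ZMod 2)) :
    gE m e α ∣ p ↔ aeval α p = 0 ∧ aeval (α ^ (1 + 2 ^ e)) p = 0 := by
  have hm0 : m ≠ 0 := by omega
  have hq : 2 ^ 4 ≤ 2 ^ m := Nat.pow_le_pow_right (by norm_num) hm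
  have i1 : IsIntegral (ZMod 2) α := Algebra.IsIntegral.isIntegral α
  have i2 : IsIntegral (ZMod 2) (α ^ (1 + 2 ^ e)) := Algebra.IsIntegral.isIntegral _
  have hcop : IsCoprime (minpoly (ZMod 2) α) (minpoly (ZMod 2) (α ^ (1 + 2 ^ e))) := by
    rw [(minpoly.irreducible i1).coprime_iff_not_dvd]
    intro hd
    have hd2 : (minpoly (ZMod 2) (α ^ (1 + 2 ^ e))) ∣ X ^ ((2 ^ m - 1) / 5) - 1 := by
      apply minpoly.dvd
      obtain ⟨c, hc⟩ := h5
      obtain ⟨d, hd⟩ := h5'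
      have : α ^ (5 * d) = 1 := by rw [← hd, ← hα, pow_orderOf_eq_one]
      rw [map_sub, map_pow, aeval_X, map_one, hd, Nat.mul_div_cancel_left _ (by norm_num), hc,
        ← pow_mul, show 5 * c * d = 5 * d * c by ring, pow_mul, this, one_pow, sub_self]
    have h0 := (minpoly.dvd_iff).1 (hd.trans hd2)
    rw [map_sub, map_pow, aeval_X, map_one, sub_eq_zero] at h0
    have h1 := orderOf_dvd_of_pow_eq_one h0
    rw [hα] at h1
    have := Nat.le_of_dvd (by omega) h1
    omega
  rw [gE, ← minpoly.dvd_iff, ← minpoly.dvd_iff]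
  exact ⟨fun h => ⟨(dvd_mul_right _ _).trans h, (dvd_mul_left _ _).trans h⟩,
    fun h => hcop.mul_dvd h.1 h.2⟩

theorem aux_sum_fin {R : Type*} [AddCommMonoid R] (N : ℕ) (f : Fin N → R)
    (hf : ∀ i : Fin N, ¬ (i : ℕ) < N - 1 → f i = 0) :
    ∑ i : Fin (N - 1), f (Fin.castLE (Nat.sub_le _ _) i) = ∑ i, f i := by
  apply Fintype.sum_of_injective (Fin.castLE (Nat.sub_le N 1)) (Fin.castLE_injective _)
  · intro i hi
    apply hf
    intro h
    exact hi ⟨⟨i, h⟩, rfl⟩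
  · intro i
    rfl

theorem aux_ncard (m e : ℕ) (hm : 4 ≤ m) (h5 : 5 ∣ 1 + 2 ^ e) (h5' : 5 ∣ 2 ^ m - 1)
    (α : GaloisField 2 m) (hα : orderOf α = 2 ^ m - 1)
    [Fintype (GaloisField 2 m)] [DecidableEq (GaloisField 2 m)]
    (hF : Fintype.card (GaloisField 2 m) = 2 ^ m) :
    {c : Fin (2 ^ m) → ZMod 2 | c ∈ CEbar m e α ∧ hammingNorm c = 6}.ncard =
      #{T ∈ powersetCard 6 (univ : Finset (GaloisField 2 m)) |
        ∑ x ∈ T, x = 0 ∧ ∑ x ∈ T, x ^ (1 + 2 ^ e) = 0} := by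
  have hq : 2 ^ 4 ≤ 2 ^ m := Nat.pow_le_pow_right (by norm_num) hm
  have hα0 : α ≠ 0 := by
    rintro rfl
    rw [orderOf_zero] at hα
    omega
  set φ : Fin (2 ^ m) → GaloisField 2 m := fun i => if (i : ℕ) < 2 ^ m - 1 then α ^ (i : ℕ) else 0
    with hφ
  have hinj : Function.Injective φ := by
    intro i j hij
    have hi := i.2
    have hj := j.2
    simp only [hφ] at hij
    split_ifs at hij with h1 h2 h2
    · rw [← hα] at h1 h2
      exact Fin.ext (pow_injOn_Iio_orderOf h1 h2 hij)
    · exact absurd hij (pow_ne_zero _ hα0)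
    · exact absurd hij.symm (pow_ne_zero _ hα0)
    · apply Fin.ext
      omega
  have hbij : Function.Bijective φ := by
    rw [Fintype.bijective_iff_injective_and_card]
    exact ⟨hinj, by rw [hF, Fintype.card_fin]⟩
  set Φ : Fin (2 ^ m) ↪ GaloisField 2 m := ⟨φ, hinj⟩ with hΦ
  set G : (Fin (2 ^ m) → ZMod 2) → Finset (GaloisField 2 m) := fun c =>
    ({i | c i ≠ 0} : Finset (Fin (2 ^ m))).map Φ with hG
  have h01 : ∀ t : ZMod 2, t = if t ≠ 0 then 1 else 0 := by decide
  have hGinj : Function.Injective G := by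
    intro c d hcd
    have := Finset.map_injective Φ hcd
    funext i
    have h := Finset.ext_iff.1 this i
    simp only [mem_filter, mem_univ, true_and] at h
    rw [h01 (c i), h01 (d i)]
    simp only [h]
  have hcard : ∀ c, #(G c) = hammingNorm c := by
    intro c
    simp only [hG, card_map]
    rfl
  have hsum : ∀ c (k : ℕ), k ≠ 0 → aeval (α ^ k)
      (codePoly (fun i : Fin (2 ^ m - 1) => c (Fin.castLE (Nat.sub_le _ _) i))) =
      ∑ x ∈ G c, x ^ k := by
    intro c k hk
    simp only [hG, sum_map, hΦ, Function.Embedding.coeFn_mk, codePoly, map_sum, map_mul,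
      aeval_C, map_pow, aeval_X]
    rw [sum_filter, ← aux_sum_fin (2 ^ m) (fun i => if c i ≠ 0 then φ i ^ k else 0)]
    · refine sum_congr rfl fun i _ => ?_
      have : φ (Fin.castLE (Nat.sub_le _ _) i) = α ^ (i : ℕ) := by
        simp only [hφ, Fin.val_castLE, i.2, if_true]
      rw [this, ← pow_mul, ← pow_mul, mul_comm k]
      conv_lhs => rw [h01 (c _)]
      split_ifs <;> simp
    · intro i hi
      simp [hφ, hi, hk]
  have hpar : ∀ c : Fin (2 ^ m) → ZMod 2, hammingNorm c = 6 → ∑ i, c i = 0 := by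
    intro c hc
    rw [sum_congr rfl (fun i _ => h01 (c i)), ← sum_filter, sum_const]
    have : #{i | c i ≠ 0} = 6 := hc
    rw [this]
    decide
  have hmem : ∀ c, (c ∈ CEbar m e α ∧ hammingNorm c = 6) ↔
      G c ∈ ({T ∈ powersetCard 6 (univ : Finset (GaloisField 2 m)) |
        ∑ x ∈ T, x = 0 ∧ ∑ x ∈ T, x ^ (1 + 2 ^ e) = 0} : Finset _) := by
    intro c
    rw [mem_filter, mem_powersetCard, hcard, ← hsum c (1 + 2 ^ e) (by positivity)]
    have h1 := hsum c 1 one_ne_zero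
    simp only [pow_one] at h1
    rw [← h1, ← aux_dvd m e hm h5 h5' α hα]
    constructor
    · rintro ⟨⟨h, -⟩, h6⟩
      exact ⟨⟨subset_univ _, h6⟩, h⟩
    · rintro ⟨⟨-, h6⟩, h⟩
      exact ⟨⟨h, hpar c h6⟩, h6⟩
  rw [← Set.ncard_image_of_injective _ hGinj, ← Set.ncard_coe_finset]
  congr 1
  ext T
  rw [Set.mem_image, mem_coe]
  constructor
  · rintro ⟨c, hc, rfl⟩
    exact (hmem c).1 hc
  · intro hT
    have : G (fun i => if φ i ∈ T then 1 else 0) = T := by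
      ext x
      obtain ⟨i, rfl⟩ := hbij.2 x
      simp only [hG, mem_map, mem_filter, mem_univ, true_and, hΦ, Function.Embedding.coeFn_mk]
      constructor
      · rintro ⟨j, hj, hji⟩
        rw [← hji]
        by_contra hn
        simp [hn] at hj
      · intro hi
        exact ⟨i, by simp [hi], rfl⟩
    refine ⟨_, (hmem _).2 ?_, this⟩
    rw [this]
    exact hT

/-- For `m ≡ 0 (mod 4)` (with `m ≥ 4`) and `1 ≤ e ≤ m/2` with
`gcd(m,e) = 2`, the number of weight-6 codewords of `C̄_E` is
`Ā₆ = 2^m(2^m − 1)(2^{2m−4} + 2^{m−1} + 6)/45`. -/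
theorem number_of_weight_six_codewords
    (m e : ℕ) (hm4 : m % 4 = 0) (hm : 4 ≤ m)
    (he1 : 1 ≤ e) (heM : 2 * e ≤ m) (hgcd : Nat.gcd m e = 2)
    (α : GaloisField 2 m) (hα : orderOf α = 2 ^ m - 1) :
    45 * {c : Fin (2 ^ m) → ZMod 2 | c ∈ CEbar m e α ∧ hammingNorm c = 6}.ncard =
      2 ^ m * (2 ^ m - 1) * (2 ^ (2 * m - 4) + 2 ^ (m - 1) + 6) := by
  classical
  have hm0 : m ≠ 0 := by omega
  let _ : Fintype (GaloisField 2 m) := Fintype.ofFinite _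
  have hF : Fintype.card (GaloisField 2 m) = 2 ^ m := by
    rw [← Nat.card_eq_fintype_card, GaloisField.card 2 m hm0]
  obtain ⟨hg, h5, h5'⟩ := aux_gcd m e hm4 hgcd
  rw [aux_ncard m e hm h5 h5' α hα hF]
  have h := aux_count (GaloisField 2 m) m e hF hgcd hg (2 ^ m) (by rw [hF]; push_cast; rfl)
  obtain ⟨k, rfl⟩ : ∃ k, m = k + 4 := ⟨m - 4, by omega⟩
  have hq : 1 ≤ 2 ^ (k + 4) := Nat.one_le_two_pow
  rw [show 2 * (k + 4) - 4 = k + k + 4 by omega, show k + 4 - 1 = k + 3 by omega]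
  zify [hq]
  have h16 : (2 : ℤ) ^ (k + 4) = 16 * 2 ^ k := by ring
  have h16' : (2 : ℤ) ^ (k + k + 4) = 16 * 2 ^ k * 2 ^ k := by ring
  have h8 : (2 : ℤ) ^ (k + 3) = 8 * 2 ^ k := by ring
  rw [h16] at h ⊢
  rw [h16', h8]
  apply mul_left_cancel₀ (show (16 : ℤ) ≠ 0 by norm_num)
  linear_combination h
end
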